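/- Every ω-standard model of MOST + Π1-Collection satisfies Δ0^P-WDC_ω. -/

import Mathlib

universe u

/-- de Bruijn-style formulas of the language of set theory, with primitive
bounded quantifiers (`∈`-bounded and `⊆`-bounded) and unbounded quantifiers.
`SF n` is the type of formulas with (at most) `n` free variables. -/
inductive SF : ℕ → Type
  | mem {n} (i j : Fin n) : SF n
  | eq {n} (i j : Fin n) : SF n
  | not {n} (φ : SF n) : SF n
  | and {n} (φ ψ : SF n) : SF n
  | or {n} (φ ψ : SF n) : SF n
  | bexMem {n} (i : Fin n) (φ : SF (n + 1)) : SF n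
  | ballMem {n} (i : Fin n) (φ : SF (n + 1)) : SF n
  | bexSub {n} (i : Fin n) (φ : SF (n + 1)) : SF n
  | ballSub {n} (i : Fin n) (φ : SF (n + 1)) : SF n
  | ex {n} (φ : SF (n + 1)) : SF n
  | all {n} (φ : SF (n + 1)) : SF n

variable {X : Type u}

/-- `a ⊆ b` in the structure `⟨X, E⟩`. -/
def SubE (E : X → X → Prop) (a b : X) : Prop := ∀ z, E z a → E z b

/-- Satisfaction of a formula in the structure `⟨X, E⟩` under a valuation. -/
def SF.Eval (E : X → X → Prop) : {n : ℕ} → SF n → (Fin n → X) → Prop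
  | _, .mem i j, v => E (v i) (v j)
  | _, .eq i j, v => v i = v j
  | _, .not φ, v => ¬ φ.Eval E v
  | _, .and φ ψ, v => φ.Eval E v ∧ ψ.Eval E v
  | _, .or φ ψ, v => φ.Eval E v ∨ ψ.Eval E v
  | _, .bexMem i φ, v => ∃ x, E x (v i) ∧ φ.Eval E (Fin.snoc v x)
  | _, .ballMem i φ, v => ∀ x, E x (v i) → φ.Eval E (Fin.snoc v x)
  | _, .bexSub i φ, v => ∃ x, SubE E x (v i) ∧ φ.Eval E (Fin.snoc v x)
  | _, .ballSub i φ, v => ∀ x, SubE E x (v i) → φ.Eval E (Fin.snoc v x)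
  | _, .ex φ, v => ∃ x, φ.Eval E (Fin.snoc v x)
  | _, .all φ, v => ∀ x, φ.Eval E (Fin.snoc v x)

/-- `Δ₀` formulas: only `∈`-bounded quantifiers. -/
def SF.IsDelta0 : {n : ℕ} → SF n → Prop
  | _, .mem _ _ => True
  | _, .eq _ _ => True
  | _, .not φ => φ.IsDelta0
  | _, .and φ ψ => φ.IsDelta0 ∧ ψ.IsDelta0
  | _, .or φ ψ => φ.IsDelta0 ∧ ψ.IsDelta0
  | _, .bexMem _ φ => φ.IsDelta0
  | _, .ballMem _ φ => φ.IsDelta0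
  | _, .bexSub _ _ => False
  | _, .ballSub _ _ => False
  | _, .ex _ => False
  | _, .all _ => False

/-- Takahashi's class `Δ₀^𝒫`: only `∈`-bounded and `⊆`-bounded quantifiers. -/
def SF.IsDelta0P : {n : ℕ} → SF n → Prop
  | _, .mem _ _ => True
  | _, .eq _ _ => True
  | _, .not φ => φ.IsDelta0P
  | _, .and φ ψ => φ.IsDelta0P ∧ ψ.IsDelta0P
  | _, .or φ ψ => φ.IsDelta0P ∧ ψ.IsDelta0P
  | _, .bexMem _ φ => φ.IsDelta0P
  | _, .ballMem _ φ => φ.IsDelta0P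
  | _, .bexSub _ φ => φ.IsDelta0P
  | _, .ballSub _ φ => φ.IsDelta0P
  | _, .ex _ => False
  | _, .all _ => False

def Delta0C : ∀ n, SF n → Prop := fun _ φ => φ.IsDelta0
def Delta0PC : ∀ n, SF n → Prop := fun _ φ => φ.IsDelta0P
def Sigma1C : ∀ n, SF n → Prop := fun _ φ => ∃ ψ, ψ.IsDelta0 ∧ φ = SF.ex ψ
def Pi1C : ∀ n, SF n → Prop := fun _ φ => ∃ ψ, ψ.IsDelta0 ∧ φ = SF.all ψ
def Sigma1PC : ∀ n, SF n → Prop := fun _ φ => ∃ ψ, ψ.IsDelta0P ∧ φ = SF.ex ψ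
def Pi1PC : ∀ n, SF n → Prop := fun _ φ => ∃ ψ, ψ.IsDelta0P ∧ φ = SF.all ψ
def FullC : ∀ n, SF n → Prop := fun _ _ => True

/-- A Gödel numbering of formulas. -/
def SF.encode : {n : ℕ} → SF n → ℕ
  | _, .mem i j => Nat.pair 0 (Nat.pair i.val j.val)
  | _, .eq i j => Nat.pair 1 (Nat.pair i.val j.val)
  | _, .not φ => Nat.pair 2 φ.encode
  | _, .and φ ψ => Nat.pair 3 (Nat.pair φ.encode ψ.encode)
  | _, .or φ ψ => Nat.pair 4 (Nat.pair φ.encode ψ.encode)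
  | _, .bexMem i φ => Nat.pair 5 (Nat.pair i.val φ.encode)
  | _, .ballMem i φ => Nat.pair 6 (Nat.pair i.val φ.encode)
  | _, .bexSub i φ => Nat.pair 7 (Nat.pair i.val φ.encode)
  | _, .ballSub i φ => Nat.pair 8 (Nat.pair i.val φ.encode)
  | _, .ex φ => Nat.pair 9 φ.encode
  | _, .all φ => Nat.pair 10 φ.encode

/-- A theory (set of sentences) is recursively enumerable if the set of Gödel
numbers of its members is the domain of a partial recursive function. -/
def REset (S : Set (SF 0)) : Prop :=
  ∃ f : ℕ →. ℕ, Nat.Partrec f ∧ ∀ φ : SF 0, φ ∈ S ↔ SF.encode φ ∈ f.Dom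

/-- `⟨X, E⟩ ⊨ S` for a set `S` of sentences. -/
def SatT (E : X → X → Prop) (S : Set (SF 0)) : Prop :=
  ∀ φ ∈ S, SF.Eval E φ (fun i => i.elim0)

/-! ## Axioms and axiom schemes -/

def ExtensionalityAx (E : X → X → Prop) : Prop := ∀ a b, (∀ z, E z a ↔ E z b) → a = b
def EmptySetAx (E : X → X → Prop) : Prop := ∃ a, ∀ z, ¬ E z a
def PairAx (E : X → X → Prop) : Prop := ∀ x y, ∃ a, ∀ z, E z a ↔ (z = x ∨ z = y)
def UnionAx (E : X → X → Prop) : Prop := ∀ a, ∃ b, ∀ z, E z b ↔ ∃ y, E y a ∧ E z y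
def SetDiffAx (E : X → X → Prop) : Prop := ∀ a b, ∃ c, ∀ z, E z c ↔ (E z a ∧ ¬ E z b)
def PowerAx (E : X → X → Prop) : Prop := ∀ a, ∃ p, ∀ z, E z p ↔ SubE E z a
def TransSet (E : X → X → Prop) (t : X) : Prop := ∀ y, E y t → ∀ z, E z y → E z t
def TCoAx (E : X → X → Prop) : Prop := ∀ a, ∃ t, TransSet E t ∧ SubE E a t
def SuccOf (E : X → X → Prop) (x s : X) : Prop := ∀ z, E z s ↔ (E z x ∨ z = x)
def InductiveSet (E : X → X → Prop) (a : X) : Prop :=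
  (∃ e, E e a ∧ ∀ z, ¬ E z e) ∧ ∀ x, E x a → ∃ s, E s a ∧ SuccOf E x s
def InfinityAx (E : X → X → Prop) : Prop := ∃ a, InductiveSet E a
def SetFoundationAx (E : X → X → Prop) : Prop :=
  ∀ z, (∃ x, E x z) → ∃ y, E y z ∧ ∀ x, E x y → ¬ E x z
/-- The axiom of choice: every set of pairwise disjoint nonempty sets has a transversal. -/
def ACAx (E : X → X → Prop) : Prop :=
  ∀ a, (∀ x, E x a → ∃ z, E z x) →
    (∀ x y, E x a → E y a → x ≠ y → ∀ z, E z x → ¬ E z y) →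
    ∃ c, ∀ x, E x a → ∃! z, E z c ∧ E z x

def SeparationScheme (E : X → X → Prop) (C : ∀ n, SF n → Prop) : Prop :=
  ∀ (n : ℕ) (φ : SF (n + 1)), C _ φ → ∀ (p : Fin n → X) (w : X),
    ∃ y, ∀ x, E x y ↔ (E x w ∧ φ.Eval E (Fin.snoc p x))

def CollectionScheme (E : X → X → Prop) (C : ∀ n, SF n → Prop) : Prop :=
  ∀ (n : ℕ) (φ : SF (n + 2)), C _ φ → ∀ (p : Fin n → X) (w : X),
    (∀ x, E x w → ∃ y, φ.Eval E (Fin.snoc (Fin.snoc p x) y)) →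
    ∃ c, ∀ x, E x w → ∃ y, E y c ∧ φ.Eval E (Fin.snoc (Fin.snoc p x) y)

def FoundationScheme (E : X → X → Prop) (C : ∀ n, SF n → Prop) : Prop :=
  ∀ (n : ℕ) (φ : SF (n + 1)), C _ φ → ∀ p : Fin n → X,
    (∃ x, φ.Eval E (Fin.snoc p x)) →
    ∃ y, φ.Eval E (Fin.snoc p y) ∧ ∀ x, E x y → ¬ φ.Eval E (Fin.snoc p x)

/-! ## Theories -/

def ModelMminus (E : X → X → Prop) : Prop :=
  ExtensionalityAx E ∧ EmptySetAx E ∧ PairAx E ∧ UnionAx E ∧ SetDiffAx E ∧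
    TCoAx E ∧ InfinityAx E ∧ SeparationScheme E Delta0C ∧ SetFoundationAx E

def ModelM (E : X → X → Prop) : Prop := ModelMminus E ∧ PowerAx E

def ModelKP (E : X → X → Prop) : Prop :=
  ExtensionalityAx E ∧ PairAx E ∧ UnionAx E ∧ SeparationScheme E Delta0C ∧
    CollectionScheme E Delta0C ∧ FoundationScheme E Pi1C

def ModelKPP (E : X → X → Prop) : Prop :=
  ModelM E ∧ CollectionScheme E Delta0PC ∧ FoundationScheme E Pi1PC

def ModelMOST (E : X → X → Prop) : Prop :=
  ModelM E ∧ SeparationScheme E Sigma1C ∧ ACAx E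

def ModelZF (E : X → X → Prop) : Prop :=
  ExtensionalityAx E ∧ EmptySetAx E ∧ PairAx E ∧ UnionAx E ∧ PowerAx E ∧
    InfinityAx E ∧ SeparationScheme E FullC ∧ CollectionScheme E FullC ∧
    FoundationScheme E FullC

/-! ## Internal set-theoretic machinery -/

/-- `p = {{x}, {x, y}}` (Kuratowski pair). -/
def IsPair (E : X → X → Prop) (p x y : X) : Prop :=
  ∀ z, E z p ↔ ((∀ w, E w z ↔ w = x) ∨ (∀ w, E w z ↔ (w = x ∨ w = y)))

def FunApp (E : X → X → Prop) (f x y : X) : Prop := ∃ q, E q f ∧ IsPair E q x y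

/-- `f` is a function with domain `d`. -/
def IsFuncOn (E : X → X → Prop) (f d : X) : Prop :=
  (∀ q, E q f → ∃ x y, IsPair E q x y ∧ E x d) ∧
  (∀ x y y', FunApp E f x y → FunApp E f x y' → y = y') ∧
  (∀ x, E x d → ∃ y, FunApp E f x y)

/-- `f` is an injective function from `dom` into `cod`. -/
def InjFunInto (E : X → X → Prop) (f dom cod : X) : Prop :=
  IsFuncOn E f dom ∧ (∀ x y, FunApp E f x y → E y cod) ∧
  (∀ x x' y, FunApp E f x y → FunApp E f x' y → x = x')

/-- `|t| ≤ |κ|`. -/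
def CardLe (E : X → X → Prop) (t κ : X) : Prop := ∃ f, InjFunInto E f t κ

def IsOrdinal (E : X → X → Prop) (x : X) : Prop :=
  TransSet E x ∧ ∀ y, E y x → TransSet E y

/-- An (initial ordinal =) cardinal: an ordinal that does not inject into any of
its members. -/
def IsCardinal (E : X → X → Prop) (κ : X) : Prop :=
  IsOrdinal E κ ∧ ∀ β, E β κ → ¬ CardLe E κ β

/-- `t` is the transitive closure of the set `x`. -/
def IsTCset (E : X → X → Prop) (t x : X) : Prop :=
  TransSet E t ∧ SubE E x t ∧ ∀ u, TransSet E u → SubE E x u → SubE E t u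

/-- `t` is the transitive closure of `{x}`. -/
def IsTCsingleton (E : X → X → Prop) (t x : X) : Prop :=
  TransSet E t ∧ E x t ∧ ∀ u, TransSet E u → E x u → SubE E t u

def IsOmega (E : X → X → Prop) (w : X) : Prop :=
  InductiveSet E w ∧ ∀ a, InductiveSet E a → SubE E w a

/-- `⟨X, E⟩` is `ω`-standard: its internal natural numbers are order-isomorphic
to the standard natural numbers. -/
def OmegaStandard (E : X → X → Prop) : Prop :=
  ∀ w, IsOmega E w → ∃ f : ℕ → X, (∀ n, E (f n) w) ∧ (∀ x, E x w → ∃ n, x = f n) ∧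
    ∀ m n : ℕ, (E (f m) (f n) ↔ m < n)

/-- `f` is (a function coding) the cumulative hierarchy `β ↦ V_β` for `β ∈ α`,
using `V_β = ⋃_{γ∈β} 𝒫(V_γ)`. -/
def IsRK (E : X → X → Prop) (α f : X) : Prop :=
  IsOrdinal E α ∧ IsFuncOn E f α ∧
  ∀ β vβ, E β α → FunApp E f β vβ →
    ∀ x, E x vβ ↔ ∃ γ, E γ β ∧ ∃ vγ, FunApp E f γ vγ ∧ SubE E x vγ

/-- Internal rank comparison `ρ(x) ≤ ρ(y)`: `x` belongs to every stage of the
cumulative hierarchy that `y` belongs to. -/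
def RankLe (E : X → X → Prop) (x y : X) : Prop :=
  ∀ α f β v, IsRK E α f → E β α → FunApp E f β v → E y v → E x v

/-- External `n`-th von Neumann natural number. -/
def IsVN (E : X → X → Prop) : ℕ → X → Prop
  | 0, x => ∀ z, ¬ E z x
  | (n + 1), x => ∃ y, IsVN E n y ∧ SuccOf E y x

/-- `a` is the `n`-th infinite cardinal `ℵ_n` (for external `n`, as computed in
the model): `ℵ₀ = ω`, and `ℵ_{n+1}` is the least cardinal above `ℵ_n`. -/
def IsAleph (E : X → X → Prop) : ℕ → X → Prop
  | 0, a => IsOmega E a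
  | (n + 1), a => ∃ b, IsAleph E n b ∧ IsCardinal E a ∧ E b a ∧
      ∀ c, IsCardinal E c → E b c → (c = a ∨ E a c)

/-- `a` is the cardinal `ℵ_ω` of the model: the least limit cardinal above `ω`. -/
def IsAlephOmega (E : X → X → Prop) (a : X) : Prop :=
  (IsCardinal E a ∧ (∃ w, IsOmega E w ∧ E w a) ∧
    (∀ β, E β a → ∃ μ, IsCardinal E μ ∧ E β μ ∧ E μ a)) ∧
  ∀ a', (IsCardinal E a' ∧ (∃ w, IsOmega E w ∧ E w a') ∧
    (∀ β, E β a' → ∃ μ, IsCardinal E μ ∧ E β μ ∧ E μ a')) → (a = a' ∨ E a a')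

/-! ## Internal satisfaction and the constructible hierarchy (for `V = L`) -/

/-- `c = ⟨n, a⟩` with the tag `n` an external natural (internally coded). -/
def TaggedBy (E : X → X → Prop) (c : X) (n : ℕ) (a : X) : Prop :=
  ∃ t, IsVN E n t ∧ IsPair E c t a

def CodeMem (E : X → X → Prop) (c i j : X) : Prop := ∃ p, IsPair E p i j ∧ TaggedBy E c 0 p
def CodeEq (E : X → X → Prop) (c i j : X) : Prop := ∃ p, IsPair E p i j ∧ TaggedBy E c 1 p
def CodeNot (E : X → X → Prop) (c' c : X) : Prop := TaggedBy E c' 2 c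
def CodeAnd (E : X → X → Prop) (c' c₁ c₂ : X) : Prop := ∃ p, IsPair E p c₁ c₂ ∧ TaggedBy E c' 3 p
def CodeEx (E : X → X → Prop) (c' i c : X) : Prop := ∃ p, IsPair E p i c ∧ TaggedBy E c' 4 p

/-- `d` is closed under the internal formation rules for codes of formulas with
variables indexed by elements of `w` (the internal `ω`). -/
def ClosedCode (E : X → X → Prop) (w d : X) : Prop :=
  (∀ i j c, E i w → E j w → CodeMem E c i j → E c d) ∧
  (∀ i j c, E i w → E j w → CodeEq E c i j → E c d) ∧
  (∀ c c', E c d → CodeNot E c' c → E c' d) ∧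
  (∀ c₁ c₂ c', E c₁ d → E c₂ d → CodeAnd E c' c₁ c₂ → E c' d) ∧
  (∀ i c c', E i w → E c d → CodeEx E c' i c → E c' d)

/-- `c` is an internal code of a first-order formula of the language of set theory. -/
def FormCode (E : X → X → Prop) (w c : X) : Prop := ∀ d, ClosedCode E w d → E c d

/-- An internal assignment of elements of `a` to the variables. -/
def IsAssign (E : X → X → Prop) (w a v : X) : Prop :=
  IsFuncOn E v w ∧ ∀ i y, FunApp E v i y → E y a

/-- `v' = v[i ↦ x]`. -/
def UpdateAssign (E : X → X → Prop) (w v : X) (i x v' : X) : Prop :=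
  FunApp E v' i x ∧ ∀ j, E j w → j ≠ i → ∀ y, (FunApp E v j y ↔ FunApp E v' j y)

def PairIn (E : X → X → Prop) (s c v : X) : Prop := ∃ q, E q s ∧ IsPair E q c v

/-- `s` is a (full) satisfaction class for the set structure `⟨a, E⟩`: a set of
pairs ⟨code, assignment⟩ obeying the Tarski conditions. -/
def SatSet (E : X → X → Prop) (w a s : X) : Prop :=
  (∀ q, E q s → ∃ c v, IsPair E q c v ∧ FormCode E w c ∧ IsAssign E w a v) ∧
  (∀ i j c v xi xj, E i w → E j w → CodeMem E c i j → IsAssign E w a v →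
    FunApp E v i xi → FunApp E v j xj → (PairIn E s c v ↔ E xi xj)) ∧
  (∀ i j c v xi xj, E i w → E j w → CodeEq E c i j → IsAssign E w a v →
    FunApp E v i xi → FunApp E v j xj → (PairIn E s c v ↔ xi = xj)) ∧
  (∀ c c' v, FormCode E w c → CodeNot E c' c → IsAssign E w a v →
    (PairIn E s c' v ↔ ¬ PairIn E s c v)) ∧
  (∀ c₁ c₂ c' v, FormCode E w c₁ → FormCode E w c₂ → CodeAnd E c' c₁ c₂ →
    IsAssign E w a v → (PairIn E s c' v ↔ (PairIn E s c₁ v ∧ PairIn E s c₂ v))) ∧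
  (∀ i c c' v, E i w → FormCode E w c → CodeEx E c' i c → IsAssign E w a v →
    (PairIn E s c' v ↔ ∃ x v', E x a ∧ IsAssign E w a v' ∧ UpdateAssign E w v i x v' ∧
      PairIn E s c v'))

/-- `b` is a subset of `a` definable over `⟨a, E⟩` (with parameters from `a`). -/
def DefSub (E : X → X → Prop) (w a s b : X) : Prop :=
  SubE E b a ∧ ∃ c, FormCode E w c ∧ ∃ v, IsAssign E w a v ∧ ∃ i, E i w ∧
    ∀ x, E x b ↔ (E x a ∧ ∃ v', IsAssign E w a v' ∧ UpdateAssign E w v i x v' ∧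
      PairIn E s c v')

/-- `f` codes the constructible hierarchy `β ↦ L_β` for `β ∈ α`, using
`L_β = ⋃_{γ∈β} Def(L_γ)`. -/
def IsLHier (E : X → X → Prop) (w f α : X) : Prop :=
  IsOrdinal E α ∧ IsFuncOn E f α ∧
  ∀ β vβ, E β α → FunApp E f β vβ →
    ∀ x, E x vβ ↔ ∃ γ, E γ β ∧ ∃ vγ, FunApp E f γ vγ ∧ ∃ s, SatSet E w vγ s ∧
      DefSub E w vγ s x

/-- The axiom `V = L`: every set belongs to some level of the constructible hierarchy. -/
def VeqL (E : X → X → Prop) : Prop :=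
  ∀ w, IsOmega E w → ∀ x, ∃ α f β vβ, IsLHier E w f α ∧ E β α ∧ FunApp E f β vβ ∧ E x vβ

/-! ## Extensions -/

/-- The substructure of `⟨X, E⟩` with underlying set `A`. -/
def restrict (E : X → X → Prop) (A : Set X) : A → A → Prop := fun a b => E a.1 b.1

/-- `B` is an end extension of `A` (both substructures of an ambient `⟨X, E⟩`). -/
def EndExtIn (E : X → X → Prop) (A B : Set X) : Prop :=
  A ⊆ B ∧ ∀ x y, x ∈ B → y ∈ A → E x y → x ∈ A

/-- `B` is a powerset-preserving end extension of `A` (within an ambient `⟨X, E⟩`);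
`x ⊆ y` is computed in `B`. -/
def PowExtIn (E : X → X → Prop) (A B : Set X) : Prop :=
  EndExtIn E A B ∧ ∀ x y, x ∈ B → y ∈ A → (∀ z, z ∈ B → E z x → E z y) → x ∈ A

/-- The whole structure `⟨X, E⟩` is an end extension of its substructure on `A`. -/
def EndExtSet (E : X → X → Prop) (A : Set X) : Prop :=
  ∀ x y, y ∈ A → E x y → x ∈ A

/-- `⟨X, E⟩` is a powerset-preserving end extension of its substructure on `A`. -/
def PowExtSet (E : X → X → Prop) (A : Set X) : Prop :=
  EndExtSet E A ∧ ∀ x y, y ∈ A → SubE E x y → x ∈ A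

/-- `⟨X, E⟩` is a rank extension of its substructure on `A`. -/
def RankExtSet (E : X → X → Prop) (A : Set X) : Prop :=
  PowExtSet E A ∧ ∀ x y, y ∈ A → RankLe E x y → x ∈ A

/-- The extension `⟨X, E⟩` of its substructure on `A` is proper and topless. -/
def ToplessSet (E : X → X → Prop) (A : Set X) : Prop :=
  A ≠ Set.univ ∧ ∀ c, (∀ x, E x c → x ∈ A) → c ∈ A

/-- The extension `⟨X, E⟩` of its substructure on `A` is proper and blunt (not topless). -/
def BluntSet (E : X → X → Prop) (A : Set X) : Prop :=
  A ≠ Set.univ ∧ ¬ ToplessSet E A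

/-! ## Weak dependent choice -/

/-- `δ_ω^φ(b, f, p)`: `f` is a function on `ω` with `f(0) = {b}` tracing the
`φ`-successor relation. -/
def IsWDCWitness (E : X → X → Prop) {n : ℕ} (φ : SF (n + 2)) (p : Fin n → X)
    (w b f : X) : Prop :=
  IsFuncOn E f w ∧
  (∃ z v, (∀ u, ¬ E u z) ∧ E z w ∧ FunApp E f z v ∧ ∀ t, E t v ↔ t = b) ∧
  ∀ m m' vm vm', E m w → SuccOf E m m' → E m' w → FunApp E f m vm → FunApp E f m' vm' →
    ((∀ x, E x vm → ∃ y, E y vm' ∧ φ.Eval E (Fin.snoc (Fin.snoc p x) y)) ∧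
     (∀ y, E y vm' → ∀ x, E x vm → φ.Eval E (Fin.snoc (Fin.snoc p x) y)))

/-- The scheme `Δ₀^𝒫-WDC_ω`. -/
def WDComega (E : X → X → Prop) : Prop :=
  ∀ (n : ℕ) (φ : SF (n + 2)), Delta0PC _ φ → ∀ p : Fin n → X,
    (∀ x, ∃ y, φ.Eval E (Fin.snoc (Fin.snoc p x) y)) →
    ∀ w, IsOmega E w → ∀ b, ∃ f, IsWDCWitness E φ p w b f

/-! ## Internal well-founded extensional relations (for `H_{≤κ}`) -/

def RRel (E : X → X → Prop) (R a b : X) : Prop := ∃ p, E p R ∧ IsPair E p a b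

def RelOn (E : X → X → Prop) (R k : X) : Prop :=
  ∀ p, E p R → ∃ a b, IsPair E p a b ∧ E a k ∧ E b k

/-- `BFEXT(R, k)`: `R ⊆ k × k` is extensional on `k`, has a top element, and every
nonempty subset of `k` has an `R`-minimal element. -/
def BFEXT (E : X → X → Prop) (R k : X) : Prop :=
  RelOn E R k ∧
  (∀ a b, E a k → E b k → (∀ c, E c k → (RRel E R c a ↔ RRel E R c b)) → a = b) ∧
  (∃ t, E t k ∧ ∀ b, E b k → b ≠ t → RRel E R b t) ∧
  (∀ S, SubE E S k → (∃ z, E z S) → ∃ m, E m S ∧ ∀ y, E y S → ¬ RRel E R y m)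

/-- `f` is an isomorphism of `⟨k, R⟩` with `⟨T, ∈⟩`. -/
def IsoOnto (E : X → X → Prop) (R k f T : X) : Prop :=
  IsFuncOn E f k ∧ (∀ x y, FunApp E f x y → E y T) ∧
  (∀ y, E y T → ∃ x, E x k ∧ FunApp E f x y) ∧
  (∀ x x' y, FunApp E f x y → FunApp E f x' y → x = x') ∧
  ∀ a b ya yb, E a k → E b k → FunApp E f a ya → FunApp E f b yb →
    (RRel E R a b ↔ E ya yb)

/-- The predicate `Xv = H_{≤κ} = {x : |TC(x)| ≤ κ}`. -/
def HleqPred (E : X → X → Prop) (Xv κ : X) : Prop :=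
  IsCardinal E κ ∧ ∀ x, E x Xv ↔ ∃ t, IsTCset E t x ∧ CardLe E t κ

/-- The explicit conjunction (i) ∧ (ii) ∧ (iii) asserting `Xv = H_{≤κ}`. -/
def ExplicitH (E : X → X → Prop) (Xv κ : X) : Prop :=
  IsCardinal E κ ∧
  (∀ R, BFEXT E R κ → ∃ x f T, E x Xv ∧ E f Xv ∧ E T Xv ∧ IsTCsingleton E T x ∧
    IsoOnto E R κ f T) ∧
  (∀ x, E x Xv → ∃ T f, E T Xv ∧ E f Xv ∧ IsTCsingleton E T x ∧ InjFunInto E f T κ)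


/-! ## Definability framework -/

abbrev Env (X : Type u) := ℕ → X
/-- Variable look-up. -/
def gv (i : ℕ) (v : Env X) : X := v i
def tl (v : Env X) : Env X := fun i => v (i + 1)
def cns (x : X) (v : Env X) : Env X := fun i => Nat.casesOn i x v

@[simp] theorem gv_cns_zero (x : X) (v : Env X) : gv 0 (cns x v) = x := rfl
@[simp] theorem gv_cns_succ (x : X) (v : Env X) (i : ℕ) : gv (i+1) (cns x v) = gv i v := rfl
@[simp] theorem gv_cns_one (x : X) (v : Env X) : gv 1 (cns x v) = gv 0 v := rfl
@[simp] theorem gv_cns_two (x : X) (v : Env X) : gv 2 (cns x v) = gv 1 v := rfl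
@[simp] theorem tl_cns (x : X) (v : Env X) : tl (cns x v) = v := rfl
@[simp] theorem cns_tl (v : Env X) : cns (gv 0 v) (tl v) = v := by
  funext i; cases i <;> rfl

def ev (s : X ⊕ ℕ) (v : Env X) : X := Sum.elim id v s

class Tm (t : Env X → X) : Prop where
  out : ∃ s : X ⊕ ℕ, ∀ v, t v = ev s v

class Vc (τ : Env X → Env X) : Prop where
  out : ∃ k : ℕ, ∀ v i, τ v i = v (i + k)

instance : Vc (fun v : Env X => v) := ⟨0, fun _ _ => rfl⟩
instance (τ : Env X → Env X) [h : Vc τ] : Vc (fun v => tl (τ v)) := by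
  obtain ⟨k, hk⟩ := h.out
  refine ⟨k + 1, fun v i => ?_⟩
  simp only [tl, hk]; congr 1; omega
instance (c : X) : Tm (fun _ : Env X => c) := ⟨Sum.inl c, fun _ => rfl⟩
instance (i : ℕ) (τ : Env X → Env X) [h : Vc τ] : Tm (fun v => gv i (τ v)) := by
  obtain ⟨k, hk⟩ := h.out
  exact ⟨Sum.inr (i + k), fun v => by simp [gv, hk, ev]⟩

instance : Vc (tl : Env X → Env X) := ⟨1, fun _ _ => rfl⟩
instance (i : ℕ) : Tm (gv i : Env X → X) := ⟨Sum.inr i, fun _ => rfl⟩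

theorem Tm.comp {t : Env X → X} [h : Tm t] {u : ℕ → Env X → X} (hu : ∀ i, Tm (u i)) :
    Tm (fun v => t (fun i => u i v)) := by
  obtain ⟨s, hs⟩ := h.out
  cases s with
  | inl c => exact ⟨Sum.inl c, fun v => by rw [hs]; rfl⟩
  | inr j => exact ⟨(hu j).out.choose, fun v => by rw [hs, ← (hu j).out.choose_spec]; rfl⟩

/-- Renaming of variables. -/
def liftR {n m : ℕ} (ρ : Fin n → Fin m) : Fin (n + 1) → Fin (m + 1) :=
  Fin.lastCases (Fin.last m) (fun i => (ρ i).castSucc)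

def SF.ren : {n m : ℕ} → (Fin n → Fin m) → SF n → SF m
  | _, _, ρ, .mem i j => .mem (ρ i) (ρ j)
  | _, _, ρ, .eq i j => .eq (ρ i) (ρ j)
  | _, _, ρ, .not φ => .not (φ.ren ρ)
  | _, _, ρ, .and φ ψ => .and (φ.ren ρ) (ψ.ren ρ)
  | _, _, ρ, .or φ ψ => .or (φ.ren ρ) (ψ.ren ρ)
  | _, _, ρ, .bexMem i φ => .bexMem (ρ i) (φ.ren (liftR ρ))
  | _, _, ρ, .ballMem i φ => .ballMem (ρ i) (φ.ren (liftR ρ))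
  | _, _, ρ, .bexSub i φ => .bexSub (ρ i) (φ.ren (liftR ρ))
  | _, _, ρ, .ballSub i φ => .ballSub (ρ i) (φ.ren (liftR ρ))
  | _, _, ρ, .ex φ => .ex (φ.ren (liftR ρ))
  | _, _, ρ, .all φ => .all (φ.ren (liftR ρ))

theorem snoc_liftR {n m : ℕ} (ρ : Fin n → Fin m) (v : Fin m → X) (x : X) :
    (fun i => (Fin.snoc v x : Fin (m+1) → X) (liftR ρ i)) = (Fin.snoc (fun i => v (ρ i)) x : Fin (n+1) → X) := by
  funext i
  refine Fin.lastCases ?_ (fun i => ?_) i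
  · simp [liftR]
  · simp [liftR]

theorem SF.ren_eval (E : X → X → Prop) {n : ℕ} (φ : SF n) : ∀ {m : ℕ} (ρ : Fin n → Fin m) (v : Fin m → X),
    (φ.ren ρ).Eval E v ↔ φ.Eval E (fun i => v (ρ i)) := by
  induction φ with
  | mem i j => intros; rfl
  | eq i j => intros; rfl
  | not φ ih => intros; simp only [SF.ren, SF.Eval, ih]
  | and φ ψ ih ih' => intros; simp only [SF.ren, SF.Eval, ih, ih']
  | or φ ψ ih ih' => intros; simp only [SF.ren, SF.Eval, ih, ih']
  | bexMem i φ ih => intros; simp only [SF.ren, SF.Eval, ih, snoc_liftR]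
  | ballMem i φ ih => intros; simp only [SF.ren, SF.Eval, ih, snoc_liftR]
  | bexSub i φ ih => intros; simp only [SF.ren, SF.Eval, ih, snoc_liftR]
  | ballSub i φ ih => intros; simp only [SF.ren, SF.Eval, ih, snoc_liftR]
  | ex φ ih => intros; simp only [SF.ren, SF.Eval, ih, snoc_liftR]
  | all φ ih => intros; simp only [SF.ren, SF.Eval, ih, snoc_liftR]

theorem SF.ren_delta0 {n : ℕ} (φ : SF n) : ∀ {m : ℕ} (ρ : Fin n → Fin m), φ.IsDelta0 → (φ.ren ρ).IsDelta0 := by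
  induction φ with
  | mem i j => intros; trivial
  | eq i j => intros; trivial
  | not φ ih => intro m ρ h; exact ih ρ h
  | and φ ψ ih ih' => intro m ρ h; exact ⟨ih ρ h.1, ih' ρ h.2⟩
  | or φ ψ ih ih' => intro m ρ h; exact ⟨ih ρ h.1, ih' ρ h.2⟩
  | bexMem i φ ih => intro m ρ h; exact ih _ h
  | ballMem i φ ih => intro m ρ h; exact ih _ h
  | bexSub i φ ih => intro m ρ h; exact h
  | ballSub i φ ih => intro m ρ h; exact h
  | ex φ ih => intro m ρ h; exact h
  | all φ ih => intro m ρ h; exact h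

/-- Predicates on environments definable by a `Δ₀` formula with parameters. -/
def D0 (E : X → X → Prop) (P : Env X → Prop) : Prop :=
  ∃ (m : ℕ) (φ : SF m) (t : Fin m → X ⊕ ℕ), φ.IsDelta0 ∧ ∀ v, P v ↔ φ.Eval E (fun i => ev (t i) v)

def Sg (Γ : (Env X → Prop) → Prop) (P : Env X → Prop) : Prop :=
  ∃ Q : Env X → X → Prop, Γ (fun w => Q (tl w) (gv 0 w)) ∧ ∀ v, P v ↔ ∃ y, Q v y

def Ng (Γ : (Env X → Prop) → Prop) (P : Env X → Prop) : Prop := Γ (fun v => ¬ P v)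

structure Closed (E : X → X → Prop) (Γ : (Env X → Prop) → Prop) : Prop where
  mem : ∀ (s t : Env X → X) [Tm s] [Tm t], Γ (fun v => E (s v) (t v))
  nmem : ∀ (s t : Env X → X) [Tm s] [Tm t], Γ (fun v => ¬ E (s v) (t v))
  eq : ∀ (s t : Env X → X) [Tm s] [Tm t], Γ (fun v => s v = t v)
  neq : ∀ (s t : Env X → X) [Tm s] [Tm t], Γ (fun v => ¬ s v = t v)
  and : ∀ {P Q}, Γ P → Γ Q → Γ (fun v => P v ∧ Q v)
  or : ∀ {P Q}, Γ P → Γ Q → Γ (fun v => P v ∨ Q v)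
  bex : ∀ {Q : Env X → X → Prop} (t : Env X → X) [Tm t], Γ (fun w => Q (tl w) (gv 0 w)) →
    Γ (fun v => ∃ x, E x (t v) ∧ Q v x)
  ball : ∀ {Q : Env X → X → Prop} (t : Env X → X) [Tm t], Γ (fun w => Q (tl w) (gv 0 w)) →
    Γ (fun v => ∀ x, E x (t v) → Q v x)
  subst : ∀ {P : Env X → Prop} (u : ℕ → Env X → X), (∀ i, Tm (u i)) → Γ P → Γ (fun v => P (fun i => u i v))

def CollFor (E : X → X → Prop) (Γ : (Env X → Prop) → Prop) : Prop :=
  ∀ Q : Env X → Prop, Γ Q → ∀ (v : Env X) (w : X), (∀ x, E x w → ∃ y, Q (cns y (cns x v))) →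
    ∃ c, ∀ x, E x w → ∃ y, E y c ∧ Q (cns y (cns x v))

theorem D0.not {E : X → X → Prop} {P : Env X → Prop} (h : D0 E P) : D0 E (fun v => ¬ P v) := by
  obtain ⟨m, φ, t, h, h'⟩ := h
  exact ⟨m, .not φ, t, h, fun v => not_congr (h' v)⟩

theorem D0.and {E : X → X → Prop} {P Q : Env X → Prop} (hP : D0 E P) (hQ : D0 E Q) :
    D0 E (fun v => P v ∧ Q v) := by
  obtain ⟨m, φ, t, h, h'⟩ := hP
  obtain ⟨k, ψ, s, g, g'⟩ := hQ
  refine ⟨m + k, .and (φ.ren (Fin.castAdd k)) (ψ.ren (Fin.natAdd m)), Fin.append t s,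
    ⟨SF.ren_delta0 _ _ h, SF.ren_delta0 _ _ g⟩, fun v => ?_⟩
  simp only [SF.Eval, SF.ren_eval, Fin.append_left, Fin.append_right, h', g']

theorem D0.bex {E : X → X → Prop} {Q : Env X → X → Prop} (t : Env X → X) [ht : Tm t]
    (h : D0 E (fun w => Q (tl w) (gv 0 w))) : D0 E (fun v => ∃ x, E x (t v) ∧ Q v x) := by
  obtain ⟨m, φ, s, h, h'⟩ := h
  obtain ⟨r, hr⟩ := ht.out
  classical
  refine ⟨m + 1, .bexMem (Fin.last m) (φ.ren (fun i => if s i = Sum.inr 0 then Fin.last (m+1) else i.castSucc.castSucc)),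
    Fin.snoc (fun i => Sum.map id Nat.pred (s i)) r, SF.ren_delta0 _ _ h, fun v => ?_⟩
  simp only [SF.Eval, SF.ren_eval, Fin.snoc_last, hr]
  refine exists_congr fun x => and_congr_right fun _ => ?_
  have := h' (cns x v)
  simp only [tl_cns, gv_cns_zero] at this
  rw [this]
  refine iff_of_eq (congrArg _ ?_)
  funext i
  by_cases hi : s i = Sum.inr 0
  · simp [hi, ev, cns]
  · simp only [hi, if_false, Fin.snoc_castSucc]
    rcases hsi : s i with c | j
    · simp [ev]
    · cases j with
      | zero => exact absurd hsi hi
      | succ j => simp [ev, cns]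

theorem D0.congr {E : X → X → Prop} {P Q : Env X → Prop} (h : D0 E P) (e : ∀ v, Q v ↔ P v) : D0 E Q := by
  obtain ⟨m, φ, t, h, h'⟩ := h
  exact ⟨m, φ, t, h, fun v => (e v).trans (h' v)⟩

theorem D0.closed (E : X → X → Prop) : Closed E (D0 E) := by
  have mem : ∀ (s t : Env X → X) [Tm s] [Tm t], D0 E (fun v => E (s v) (t v)) := by
    intro s t hs ht
    obtain ⟨a, ha⟩ := hs.out
    obtain ⟨b, hb⟩ := ht.out
    exact ⟨2, .mem 0 1, ![a, b], trivial, fun v => by simp [SF.Eval, ha, hb]⟩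
  have eq : ∀ (s t : Env X → X) [Tm s] [Tm t], D0 E (fun v => s v = t v) := by
    intro s t hs ht
    obtain ⟨a, ha⟩ := hs.out
    obtain ⟨b, hb⟩ := ht.out
    exact ⟨2, .eq 0 1, ![a, b], trivial, fun v => by simp [SF.Eval, ha, hb]⟩
  refine ⟨mem, fun s t _ _ => (mem s t).not, eq, fun s t _ _ => (eq s t).not, D0.and, ?_, D0.bex, ?_, ?_⟩
  · intro P Q hP hQ
    exact (hP.not.and hQ.not).not.congr fun v => by tauto
  · intro Q t _ h
    refine (D0.bex (Q := fun v x => ¬ Q v x) t h.not).not.congr fun v => ?_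
    push Not; rfl
  · intro P u hu h
    obtain ⟨m, φ, t, h, h'⟩ := h
    have : ∀ i, ∃ s : X ⊕ ℕ, ∀ v, ev (t i) (fun i => u i v) = ev s v := by
      intro i
      have : Tm (fun v : Env X => ev (t i) v) := ⟨_, fun _ => rfl⟩
      exact (Tm.comp (t := fun v => ev (t i) v) hu).out
    choose s hs using this
    exact ⟨m, φ, s, h, fun v => by simp only [h', hs]⟩

theorem Ng.closed {E : X → X → Prop} {Γ : (Env X → Prop) → Prop} (h : Closed E Γ) : Closed E (Ng Γ) := by
  refine ⟨h.nmem, ?_, h.neq, ?_, ?_, ?_, ?_, ?_, ?_⟩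
  · intro s t _ _; simpa only [Ng, not_not] using h.mem s t
  · intro s t _ _; simpa only [Ng, not_not] using h.eq s t
  · intro P Q hP hQ; simpa only [Ng, not_and_or] using h.or hP hQ
  · intro P Q hP hQ; simpa only [Ng, not_or] using h.and hP hQ
  · intro Q t _ hQ
    have := h.ball (Q := fun v x => ¬ Q v x) t hQ
    simpa only [Ng, not_exists, not_and] using this
  · intro Q t _ hQ
    have := h.bex (Q := fun v x => ¬ Q v x) t hQ
    simpa only [Ng, not_forall, exists_prop] using this
  · intro P u hu hP
    exact h.subst u hu hP

theorem Closed.weak {E : X → X → Prop} {Γ : (Env X → Prop) → Prop} (h : Closed E Γ) {Q : Env X → X → Prop}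
    (hQ : Γ (fun w => Q (tl w) (gv 0 w))) (k : ℕ) (t : Env X → X) [Tm t] :
    Γ (fun w => Q (fun i => w (i + k)) (t w)) := by
  have := h.subst (fun i => Nat.casesOn i t (fun i w => w (i + k))) (by
    intro i; cases i with
    | zero => assumption
    | succ i => exact ⟨Sum.inr (i + k), fun v => rfl⟩) hQ
  exact this

theorem Sg.ex {E : X → X → Prop} {Γ : (Env X → Prop) → Prop} (h : Closed E Γ) (hp : PairAx E)
    {Q : Env X → X → Prop} (hQ : Sg Γ (fun w => Q (tl w) (gv 0 w))) : Sg Γ (fun v => ∃ x, Q v x) := by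
  obtain ⟨R, hR, hR'⟩ := hQ
  refine ⟨fun v q => ∃ x, E x q ∧ ∃ y, E y q ∧ R (cns x v) y, ?_, fun v => ?_⟩
  · refine h.bex (Q := fun v x => ∃ y, E y (gv 0 v) ∧ R (cns x (tl v)) y) (gv 0) ?_
    refine h.bex (Q := fun v y => R (cns (gv 0 v) (tl (tl v))) y) (fun w => gv 0 (tl w)) ?_
    have := h.subst (fun i => Nat.casesOn i (fun w => w 0) (fun i => Nat.casesOn i (fun w => w 1) (fun i w => w (i + 3)))) (by
      intro i
      rcases i with _ | _ | i
      · exact ⟨Sum.inr 0, fun v => rfl⟩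
      · exact ⟨Sum.inr 1, fun v => rfl⟩
      · exact ⟨Sum.inr (i+3), fun v => rfl⟩) hR
    convert this using 2 with w
    have e : (cns (gv 0 (tl w)) (tl (tl (tl w)))) = tl (fun i => Nat.casesOn (motive := fun _ => Env X → X) i (fun w => w 0) (fun i => Nat.casesOn (motive := fun _ => Env X → X) i (fun w => w 1) (fun i w => w (i + 3))) w) := by
      funext i; cases i <;> rfl
    rw [e]; rfl
  · constructor
    · rintro ⟨x, hx⟩
      have := (hR' (cns x v)).1 hx
      obtain ⟨y, hy⟩ := this
      obtain ⟨q, hq⟩ := hp x y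
      exact ⟨q, x, (hq x).2 (Or.inl rfl), y, (hq y).2 (Or.inr rfl), hy⟩
    · rintro ⟨q, x, _, y, _, hy⟩
      exact ⟨x, (hR' (cns x v)).2 ⟨y, hy⟩⟩

theorem Sg.incl {E : X → X → Prop} {Γ : (Env X → Prop) → Prop} (h : Closed E Γ) [Nonempty X]
    {P : Env X → Prop} (hP : Γ P) : Sg Γ P := by
  refine ⟨fun v _ => P v, ?_, fun v => by simp⟩
  exact h.subst (fun i w => w (i + 1)) (fun i => ⟨Sum.inr (i+1), fun v => rfl⟩) hP

theorem Sg.closed {E : X → X → Prop} {Γ : (Env X → Prop) → Prop} (h : Closed E Γ) (hp : PairAx E)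
    (hc : CollFor E Γ) [Nonempty X] : Closed E (Sg Γ) := by
  have swap : ∀ {Q : Env X → X → Prop} {R : Env X → X → Prop}, Γ (fun w => R (tl w) (gv 0 w)) →
      Γ (fun w => R (cns (gv 0 w) (tl (tl w))) (gv 1 w)) := by
    intro _ R hR
    have := h.subst (fun i => Nat.casesOn i (fun w => w 1) (fun i => Nat.casesOn i (fun w => w 0) (fun i w => w (i + 2)))) (by
      intro i
      rcases i with _ | _ | i
      · exact ⟨Sum.inr 1, fun v => rfl⟩
      · exact ⟨Sum.inr 0, fun v => rfl⟩
      · exact ⟨Sum.inr (i+2), fun v => rfl⟩) hR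
    convert this using 2 with w
    rename_i w
    have e : (cns (gv 0 w) (tl (tl w))) = tl (fun i => Nat.casesOn (motive := fun _ => Env X → X) i (fun w => w 1) (fun i => Nat.casesOn (motive := fun _ => Env X → X) i (fun w => w 0) (fun i w => w (i + 2))) w) := by
      funext i; cases i <;> rfl
    rw [e]; rfl
  have mv : ∀ {R : Env X → X → Prop}, Γ (fun w => R (tl w) (gv 0 w)) →
      Γ (fun w => R (cns (gv 1 w) (tl (tl (tl w)))) (gv 0 w)) := by
    intro R hR
    have := h.subst (fun i => Nat.casesOn i (fun w => w 0) (fun i => Nat.casesOn i (fun w => w 1) (fun i w => w (i + 3)))) (by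
      intro i
      rcases i with _ | _ | i
      · exact ⟨Sum.inr 0, fun v => rfl⟩
      · exact ⟨Sum.inr 1, fun v => rfl⟩
      · exact ⟨Sum.inr (i+3), fun v => rfl⟩) hR
    convert this using 2 with w
    rename_i w
    have e : (cns (gv 1 w) (tl (tl (tl w)))) = tl (fun i => Nat.casesOn (motive := fun _ => Env X → X) i (fun w => w 0) (fun i => Nat.casesOn (motive := fun _ => Env X → X) i (fun w => w 1) (fun i w => w (i + 3))) w) := by
      funext i; cases i <;> rfl
    rw [e]; rfl
  refine ⟨fun s t _ _ => incl h (h.mem s t), fun s t _ _ => incl h (h.nmem s t), fun s t _ _ => incl h (h.eq s t),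
    fun s t _ _ => incl h (h.neq s t), ?_, ?_, ?_, ?_, ?_⟩
  · rintro P Q ⟨R, hR, hR'⟩ ⟨S, hS, hS'⟩
    refine ⟨fun v q => ∃ x, E x q ∧ ∃ y, E y q ∧ R v x ∧ S v y, ?_, fun v => ?_⟩
    · refine h.bex (Q := fun v x => ∃ y, E y (gv 0 v) ∧ R (tl v) x ∧ S (tl v) y) (gv 0) ?_
      refine h.bex (Q := fun v y => R (tl (tl v)) (gv 0 v) ∧ S (tl (tl v)) y) (fun w => gv 0 (tl w)) ?_
      exact h.and (h.weak hR 3 (fun w => gv 0 (tl w))) (h.weak hS 3 (fun w => gv 0 w))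
    · simp only [hR', hS']
      constructor
      · rintro ⟨⟨x, hx⟩, y, hy⟩
        obtain ⟨q, hq⟩ := hp x y
        exact ⟨q, x, (hq x).2 (Or.inl rfl), y, (hq y).2 (Or.inr rfl), hx, hy⟩
      · rintro ⟨q, x, _, y, _, hx, hy⟩
        exact ⟨⟨x, hx⟩, y, hy⟩
  · rintro P Q ⟨R, hR, hR'⟩ ⟨S, hS, hS'⟩
    refine ⟨fun v q => R v q ∨ S v q, h.or hR hS, fun v => ?_⟩
    simp only [hR', hS', exists_or]
  · rintro Q t ht ⟨R, hR, hR'⟩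
    refine ⟨fun v y => ∃ x, E x (t v) ∧ R (cns x v) y, ?_, fun v => ?_⟩
    · have : Tm (fun w => t (tl w)) := Tm.comp (t := t) (u := fun i w => w (i+1)) (fun i => ⟨Sum.inr (i+1), fun v => rfl⟩)
      exact h.bex (Q := fun w x => R (cns x (tl w)) (gv 0 w)) (fun w => t (tl w)) (swap (Q := R) hR)
    · have : ∀ x, Q v x ↔ ∃ y, R (cns x v) y := fun x => hR' (cns x v)
      simp only [this]
      constructor
      · rintro ⟨x, hx, y, hy⟩; exact ⟨y, x, hx, hy⟩
      · rintro ⟨y, x, hx, hy⟩; exact ⟨x, hx, y, hy⟩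
  · rintro Q t ht ⟨R, hR, hR'⟩
    refine ⟨fun v c => ∀ x, E x (t v) → ∃ y, E y c ∧ R (cns x v) y, ?_, fun v => ?_⟩
    · have : Tm (fun w => t (tl w)) := Tm.comp (t := t) (u := fun i w => w (i+1)) (fun i => ⟨Sum.inr (i+1), fun v => rfl⟩)
      refine h.ball (Q := fun w x => ∃ y, E y (gv 0 w) ∧ R (cns x (tl w)) y) (fun w => t (tl w)) ?_
      exact h.bex (Q := fun w y => R (cns (gv 0 w) (tl (tl w))) y) (fun w => gv 0 (tl w)) (mv hR)
    · have : ∀ x, Q v x ↔ ∃ y, R (cns x v) y := fun x => hR' (cns x v)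
      simp only [this]
      constructor
      · intro hx
        exact hc _ hR v (t v) hx
      · rintro ⟨c, hc⟩ x hx
        obtain ⟨y, _, hy⟩ := hc x hx
        exact ⟨y, hy⟩
  · rintro P u hu ⟨R, hR, hR'⟩
    refine ⟨fun v y => R (fun i => u i v) y, ?_, fun v => hR' _⟩
    have := h.subst (fun i => Nat.casesOn i (fun w => w 0) (fun i w => u i (tl w))) (by
      intro i
      rcases i with _ | i
      · exact ⟨Sum.inr 0, fun v => rfl⟩
      · have := hu i
        exact Tm.comp (t := u i) (u := fun i w => w (i+1)) (fun i => ⟨Sum.inr (i+1), fun v => rfl⟩)) hR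
    exact this

/-! ## Classes of definable predicates over a model of `MOST + Π₁-Collection` -/

class MC (E : X → X → Prop) : Prop where
  most : ModelMOST E
  coll : CollectionScheme E Pi1C

theorem MC.ext (E : X → X → Prop) [h : MC E] {a b : X} (hab : ∀ z, E z a ↔ E z b) : a = b :=
  h.most.1.1.1 a b hab
theorem MC.pair (E : X → X → Prop) [h : MC E] : PairAx E := h.most.1.1.2.2.1
theorem MC.union (E : X → X → Prop) [h : MC E] : UnionAx E := h.most.1.1.2.2.2.1
theorem MC.tco (E : X → X → Prop) [h : MC E] : TCoAx E := h.most.1.1.2.2.2.2.2.1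
theorem MC.found (E : X → X → Prop) [h : MC E] : SetFoundationAx E := h.most.1.1.2.2.2.2.2.2.2.2
theorem MC.power (E : X → X → Prop) [h : MC E] : PowerAx E := h.most.1.2
theorem MC.nonempty (E : X → X → Prop) [h : MC E] : Nonempty X := ⟨h.most.1.1.2.1.choose⟩

theorem D0.toSF {E : X → X → Prop} {R : Env X → Prop} (h : D0 E R) (v : Env X) (d : X) :
    ∃ (n : ℕ) (p : Fin n → X) (ψ : SF (n + 3)), ψ.IsDelta0 ∧ ∀ x y z : X,
      (ψ.Eval E (Fin.snoc (Fin.snoc (Fin.snoc p x) y) z) ↔ R (cns z (cns y (cns x v)))) := by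
  obtain ⟨m, φ, t, h, h'⟩ := h
  classical
  refine ⟨m, fun i => ev (t i) (cns d (cns d (cns d v))), φ.ren (fun i =>
    if t i = Sum.inr 0 then Fin.last (m+2) else if t i = Sum.inr 1 then (Fin.last (m+1)).castSucc else
    if t i = Sum.inr 2 then (Fin.last m).castSucc.castSucc else i.castSucc.castSucc.castSucc),
    SF.ren_delta0 _ _ h, fun x y z => ?_⟩
  rw [SF.ren_eval, h']
  refine iff_of_eq (congrArg _ ?_)
  funext i
  by_cases h0 : t i = Sum.inr 0
  · simp [h0, ev, cns]
  by_cases h1 : t i = Sum.inr 1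
  · simp [h1, ev, cns]
  by_cases h2 : t i = Sum.inr 2
  · simp [h2, ev]; rfl
  simp only [h0, h1, h2, if_false, Fin.snoc_castSucc]
  rcases hi : t i with c | j
  · rfl
  · rcases j with _ | _ | _ | j
    · exact absurd hi h0
    · exact absurd hi h1
    · exact absurd hi h2
    · rfl

theorem collP1 (E : X → X → Prop) [hE : MC E] : CollFor E (Ng (Sg (D0 E))) := by
  rintro Q ⟨R, hR, hR'⟩ v w hw
  obtain ⟨n, p, ψ, hψ, h⟩ := hR.not.toSF v w
  have e : ∀ x y, (SF.all ψ).Eval E (Fin.snoc (Fin.snoc p x) y) ↔ Q (cns y (cns x v)) := by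
    intro x y
    rw [← not_iff_not]
    refine Iff.trans ?_ (hR' _).symm
    simp only [SF.Eval, h, tl_cns, gv_cns_zero]
    push Not; rfl
  obtain ⟨c, hc⟩ := hE.coll n (.all ψ) ⟨ψ, hψ, rfl⟩ p w (fun x hx => by simpa only [e] using hw x hx)
  exact ⟨c, by simpa only [e] using hc⟩

theorem D0.ng_sg {E : X → X → Prop} [Nonempty X] {P : Env X → Prop} (h : D0 E P) : Ng (Sg (D0 E)) P :=
  Sg.incl (D0.closed E) h.not

theorem collD0 (E : X → X → Prop) [hE : MC E] : CollFor E (D0 E) := by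
  have := MC.nonempty E
  intro Q hQ
  exact collP1 E Q hQ.ng_sg

theorem closedS1 (E : X → X → Prop) [hE : MC E] : Closed E (Sg (D0 E)) :=
  have := MC.nonempty E
  Sg.closed (D0.closed E) (MC.pair E) (collD0 E)
theorem closedP1 (E : X → X → Prop) [hE : MC E] : Closed E (Ng (Sg (D0 E))) := Ng.closed (closedS1 E)
theorem closedS2 (E : X → X → Prop) [hE : MC E] : Closed E (Sg (Ng (Sg (D0 E)))) :=
  have := MC.nonempty E
  Sg.closed (closedP1 E) (MC.pair E) (collP1 E)

/-- `Sd E k P`: the predicate `P` is `Σ_k` (for `k = 1, 2`). -/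
def SdRaw (E : X → X → Prop) : ℕ → (Env X → Prop) → Prop
  | 1, P => Sg (D0 E) P
  | 2, P => Sg (Ng (Sg (D0 E))) P
  | _, _ => False

class Sd (E : X → X → Prop) (k : ℕ) (P : Env X → Prop) : Prop where
  out : SdRaw E k P
class Pd (E : X → X → Prop) (k : ℕ) (P : Env X → Prop) : Prop where
  out : SdRaw E k (fun v => ¬ P v)

class Lv (k : ℕ) : Prop where
  out : k = 1 ∨ k = 2
instance : Lv 1 := ⟨Or.inl rfl⟩
instance : Lv 2 := ⟨Or.inr rfl⟩

section
set_option linter.unusedSectionVars false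
variable {E : X → X → Prop} [hE : MC E] {k : ℕ} [hk : Lv k]

theorem closedRaw (E : X → X → Prop) [hE : MC E] (k : ℕ) [hk : Lv k] : Closed E (SdRaw E k) := by
  rcases hk.out with rfl | rfl
  · exact closedS1 E
  · exact closedS2 E

theorem closedRawN (E : X → X → Prop) [hE : MC E] (k : ℕ) [hk : Lv k] : Closed E (Ng (SdRaw E k)) :=
  Ng.closed (closedRaw E k)

theorem exRaw (E : X → X → Prop) [hE : MC E] (k : ℕ) [hk : Lv k] {Q : Env X → X → Prop}
    (hQ : SdRaw E k (fun w => Q (tl w) (gv 0 w))) : SdRaw E k (fun v => ∃ x, Q v x) := by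
  rcases hk.out with rfl | rfl
  · exact Sg.ex (D0.closed E) (MC.pair E) hQ
  · exact Sg.ex (closedP1 E) (MC.pair E) hQ

instance (s t : Env X → X) [Tm s] [Tm t] : Sd E k (fun v => E (s v) (t v)) := ⟨(closedRaw E k).mem s t⟩
instance (s t : Env X → X) [Tm s] [Tm t] : Pd E k (fun v => E (s v) (t v)) := ⟨(closedRaw E k).nmem s t⟩
instance (s t : Env X → X) [Tm s] [Tm t] : Sd E k (fun v => s v = t v) := ⟨(closedRaw E k).eq s t⟩
instance (s t : Env X → X) [Tm s] [Tm t] : Pd E k (fun v => s v = t v) := ⟨(closedRaw E k).neq s t⟩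
instance (P Q : Env X → Prop) [h : Sd E k P] [h' : Sd E k Q] : Sd E k (fun v => P v ∧ Q v) :=
  ⟨(closedRaw E k).and h.out h'.out⟩
instance (P Q : Env X → Prop) [h : Pd E k P] [h' : Pd E k Q] : Pd E k (fun v => P v ∧ Q v) :=
  ⟨(closedRawN E k).and h.out h'.out⟩
instance (P Q : Env X → Prop) [h : Sd E k P] [h' : Sd E k Q] : Sd E k (fun v => P v ∨ Q v) :=
  ⟨(closedRaw E k).or h.out h'.out⟩
instance (P Q : Env X → Prop) [h : Pd E k P] [h' : Pd E k Q] : Pd E k (fun v => P v ∨ Q v) :=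
  ⟨(closedRawN E k).or h.out h'.out⟩
instance (P : Env X → Prop) [h : Pd E k P] : Sd E k (fun v => ¬ P v) := ⟨h.out⟩
instance (P : Env X → Prop) [h : Sd E k P] : Pd E k (fun v => ¬ P v) := ⟨by simpa only [not_not] using h.out⟩
instance (P Q : Env X → Prop) [h : Pd E k P] [h' : Sd E k Q] : Sd E k (fun v => P v → Q v) :=
  ⟨by simpa only [imp_iff_not_or] using (closedRaw E k).or h.out h'.out⟩
instance (P Q : Env X → Prop) [h : Sd E k P] [h' : Pd E k Q] : Pd E k (fun v => P v → Q v) :=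
  ⟨by simpa only [Classical.not_imp] using (closedRaw E k).and h.out h'.out⟩
instance (P Q : Env X → Prop) [Pd E k P] [Sd E k Q] [Sd E k P] [Pd E k Q] : Sd E k (fun v => P v ↔ Q v) := by
  simp only [iff_iff_implies_and_implies]; infer_instance
instance (P Q : Env X → Prop) [Pd E k P] [Sd E k Q] [Sd E k P] [Pd E k Q] : Pd E k (fun v => P v ↔ Q v) := by
  simp only [iff_iff_implies_and_implies]; infer_instance
instance (t : Env X → X) [Tm t] (Q : Env X → X → Prop) [h : Sd E k (fun w => Q (tl w) (gv 0 w))] :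
    Sd E k (fun v => ∃ x, E x (t v) ∧ Q v x) := ⟨(closedRaw E k).bex t h.out⟩
instance (t : Env X → X) [Tm t] (Q : Env X → X → Prop) [h : Pd E k (fun w => Q (tl w) (gv 0 w))] :
    Pd E k (fun v => ∃ x, E x (t v) ∧ Q v x) := ⟨(closedRawN E k).bex t h.out⟩
instance (t : Env X → X) [Tm t] (Q : Env X → X → Prop) [h : Sd E k (fun w => Q (tl w) (gv 0 w))] :
    Sd E k (fun v => ∀ x, E x (t v) → Q v x) := ⟨(closedRaw E k).ball t h.out⟩
instance (t : Env X → X) [Tm t] (Q : Env X → X → Prop) [h : Pd E k (fun w => Q (tl w) (gv 0 w))] :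
    Pd E k (fun v => ∀ x, E x (t v) → Q v x) := ⟨(closedRawN E k).ball t h.out⟩
instance (priority := 500) (Q : Env X → X → Prop) [h : Sd E k (fun w => Q (tl w) (gv 0 w))] :
    Sd E k (fun v => ∃ x, Q v x) := ⟨exRaw E k h.out⟩
instance (priority := 500) (Q : Env X → X → Prop) [h : Pd E k (fun w => Q (tl w) (gv 0 w))] :
    Pd E k (fun v => ∀ x, Q v x) := ⟨by
      have := exRaw (Q := fun v x => ¬ Q v x) E k h.out
      simpa only [not_forall] using this⟩

theorem Pd.up {P : Env X → Prop} (h : Pd E 1 P) : Sd E 2 P :=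
  have := MC.nonempty E
  ⟨Sg.incl (closedP1 E) h.out⟩
theorem Sd.up {P : Env X → Prop} (h : Sd E 1 P) : Pd E 2 P :=
  have := MC.nonempty E
  ⟨Sg.incl (closedP1 E) (by have := h.out; simpa only [Ng, not_not, SdRaw] using this)⟩

instance (priority := 200) (Q : Env X → X → Prop) [h : Pd E 1 (fun w => Q (tl w) (gv 0 w))] :
    Sd E 2 (fun v => ∀ x, Q v x) := Pd.up inferInstance
instance (priority := 200) (Q : Env X → X → Prop) [h : Sd E 1 (fun w => Q (tl w) (gv 0 w))] :
    Pd E 2 (fun v => ∃ x, Q v x) := Sd.up inferInstance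


theorem Sd.subst {P : Env X → Prop} (h : Sd E k P) (u : ℕ → Env X → X) (hu : ∀ i, Tm (u i)) :
    Sd E k (fun v => P (fun i => u i v)) := ⟨(closedRaw E k).subst u hu h.out⟩
theorem Pd.subst {P : Env X → Prop} (h : Pd E k P) (u : ℕ → Env X → X) (hu : ∀ i, Tm (u i)) :
    Pd E k (fun v => P (fun i => u i v)) := ⟨(closedRaw E k).subst u hu h.out⟩

def u4 (a b c d : Env X → X) : ℕ → Env X → X
  | 0 => a
  | 1 => b
  | 2 => c
  | _ => d
theorem u4Tm (a b c d : Env X → X) [ha : Tm a] [hb : Tm b] [hc : Tm c] [hd : Tm d] (i : ℕ) : Tm (u4 a b c d i) := by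
  rcases i with _ | _ | _ | i
  · exact ha
  · exact hb
  · exact hc
  · exact hd

theorem Sd.s4 {P : X → X → X → X → Prop} (h : Sd E k (fun v => P (gv 0 v) (gv 1 v) (gv 2 v) (gv 3 v)))
    (a b c d : Env X → X) [Tm a] [Tm b] [Tm c] [Tm d] : Sd E k (fun v => P (a v) (b v) (c v) (d v)) :=
  h.subst (u4 a b c d) (u4Tm a b c d)
theorem Pd.s4 {P : X → X → X → X → Prop} (h : Pd E k (fun v => P (gv 0 v) (gv 1 v) (gv 2 v) (gv 3 v)))
    (a b c d : Env X → X) [Tm a] [Tm b] [Tm c] [Tm d] : Pd E k (fun v => P (a v) (b v) (c v) (d v)) :=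
  h.subst (u4 a b c d) (u4Tm a b c d)
theorem Sd.s3 {P : X → X → X → Prop} (h : Sd E k (fun v => P (gv 0 v) (gv 1 v) (gv 2 v)))
    (a b c : Env X → X) [Tm a] [Tm b] [Tm c] : Sd E k (fun v => P (a v) (b v) (c v)) :=
  Sd.s4 (P := fun a b c _ => P a b c) h a b c c
theorem Pd.s3 {P : X → X → X → Prop} (h : Pd E k (fun v => P (gv 0 v) (gv 1 v) (gv 2 v)))
    (a b c : Env X → X) [Tm a] [Tm b] [Tm c] : Pd E k (fun v => P (a v) (b v) (c v)) :=
  Pd.s4 (P := fun a b c _ => P a b c) h a b c c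
theorem Sd.s2 {P : X → X → Prop} (h : Sd E k (fun v => P (gv 0 v) (gv 1 v)))
    (a b : Env X → X) [Tm a] [Tm b] : Sd E k (fun v => P (a v) (b v)) :=
  Sd.s4 (P := fun a b _ _ => P a b) h a b b b
theorem Pd.s2 {P : X → X → Prop} (h : Pd E k (fun v => P (gv 0 v) (gv 1 v)))
    (a b : Env X → X) [Tm a] [Tm b] : Pd E k (fun v => P (a v) (b v)) :=
  Pd.s4 (P := fun a b _ _ => P a b) h a b b b
theorem Sd.s1 {P : X → Prop} (h : Sd E k (fun v => P (gv 0 v)))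
    (a : Env X → X) [Tm a] : Sd E k (fun v => P (a v)) :=
  Sd.s4 (P := fun a _ _ _ => P a) h a a a a
theorem Pd.s1 {P : X → Prop} (h : Pd E k (fun v => P (gv 0 v)))
    (a : Env X → X) [Tm a] : Pd E k (fun v => P (a v)) :=
  Pd.s4 (P := fun a _ _ _ => P a) h a a a a
theorem Sd.congr {P Q : Env X → Prop} (h : Sd E k P) (e : ∀ v, Q v ↔ P v) : Sd E k Q := by
  have : Q = P := funext fun v => propext (e v)
  rwa [this]
theorem Pd.congr {P Q : Env X → Prop} (h : Pd E k P) (e : ∀ v, Q v ↔ P v) : Pd E k Q := by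
  have : Q = P := funext fun v => propext (e v)
  rwa [this]

instance (s t : Env X → X) [Tm s] [Tm t] : Sd E k (fun v => SubE E (s v) (t v)) :=
  Sd.s2 (P := SubE E) (by unfold SubE; infer_instance) s t
instance (s t : Env X → X) [Tm s] [Tm t] : Pd E k (fun v => SubE E (s v) (t v)) :=
  Pd.s2 (P := SubE E) (by unfold SubE; infer_instance) s t
instance (s : Env X → X) [Tm s] : Sd E k (fun v => TransSet E (s v)) :=
  Sd.s1 (P := TransSet E) (by unfold TransSet; infer_instance) s
instance (s : Env X → X) [Tm s] : Pd E k (fun v => TransSet E (s v)) :=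
  Pd.s1 (P := TransSet E) (by unfold TransSet; infer_instance) s
instance (s : Env X → X) [Tm s] : Sd E k (fun v => IsOrdinal E (s v)) :=
  Sd.s1 (P := IsOrdinal E) (by unfold IsOrdinal; infer_instance) s
instance (s : Env X → X) [Tm s] : Pd E k (fun v => IsOrdinal E (s v)) :=
  Pd.s1 (P := IsOrdinal E) (by unfold IsOrdinal; infer_instance) s

theorem SuccOf_iff (x s : X) : SuccOf E x s ↔ ((∀ z, E z s → E z x ∨ z = x) ∧ (∀ z, E z x → E z s) ∧ E x s) := by
  unfold SuccOf
  constructor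
  · intro h
    exact ⟨fun z hz => (h z).1 hz, fun z hz => (h z).2 (Or.inl hz), (h x).2 (Or.inr rfl)⟩
  · rintro ⟨h1, h2, h3⟩ z
    exact ⟨h1 z, fun h => h.elim (h2 z) (fun e => e ▸ h3)⟩
instance (s t : Env X → X) [Tm s] [Tm t] : Sd E k (fun v => SuccOf E (s v) (t v)) :=
  Sd.s2 (P := SuccOf E) (by simp only [SuccOf_iff]; infer_instance) s t
instance (s t : Env X → X) [Tm s] [Tm t] : Pd E k (fun v => SuccOf E (s v) (t v)) :=
  Pd.s2 (P := SuccOf E) (by simp only [SuccOf_iff]; infer_instance) s t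

def IsUP (E : X → X → Prop) (z x y : X) : Prop := E x z ∧ E y z ∧ ∀ w, E w z → w = x ∨ w = y
theorem IsUP_iff (z x y : X) : IsUP E z x y ↔ ∀ w, E w z ↔ (w = x ∨ w = y) := by
  unfold IsUP
  constructor
  · rintro ⟨h1, h2, h3⟩ w
    exact ⟨h3 w, by rintro (rfl | rfl) <;> assumption⟩
  · intro h
    exact ⟨(h x).2 (Or.inl rfl), (h y).2 (Or.inr rfl), fun w hw => (h w).1 hw⟩
instance (s t r : Env X → X) [Tm s] [Tm t] [Tm r] : Sd E k (fun v => IsUP E (s v) (t v) (r v)) :=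
  Sd.s3 (P := IsUP E) (by unfold IsUP; infer_instance) s t r
instance (s t r : Env X → X) [Tm s] [Tm t] [Tm r] : Pd E k (fun v => IsUP E (s v) (t v) (r v)) :=
  Pd.s3 (P := IsUP E) (by unfold IsUP; infer_instance) s t r

theorem IsUP_ex (x y : X) : ∃ z, IsUP E z x y := by
  obtain ⟨z, hz⟩ := MC.pair E x y
  exact ⟨z, (IsUP_iff z x y).2 hz⟩
theorem IsUP_unique {z z' x y : X} (h : IsUP E z x y) (h' : IsUP E z' x y) : z = z' := by
  rw [IsUP_iff] at h h'
  exact MC.ext E fun w => (h w).trans (h' w).symm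

theorem IsPair_def (p x y : X) : IsPair E p x y ↔ ∀ z, E z p ↔ (IsUP E z x x ∨ IsUP E z x y) := by
  have : ∀ z a b : X, IsUP E z a b ↔ ∀ w, E w z ↔ (w = a ∨ w = b) := fun z a b => IsUP_iff z a b
  simp only [IsPair, this, or_self]

theorem IsPair_iff (p x y : X) : IsPair E p x y ↔ ((∃ z, E z p ∧ IsUP E z x x) ∧ (∃ z, E z p ∧ IsUP E z x y) ∧
    ∀ z, E z p → (IsUP E z x x ∨ IsUP E z x y)) := by
  rw [IsPair_def]
  constructor
  · intro h
    obtain ⟨a, ha⟩ := IsUP_ex (E := E) x x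
    obtain ⟨b, hb⟩ := IsUP_ex (E := E) x y
    exact ⟨⟨a, (h a).2 (Or.inl ha), ha⟩, ⟨b, (h b).2 (Or.inr hb), hb⟩, fun z hz => (h z).1 hz⟩
  · rintro ⟨⟨a, ha, ha'⟩, ⟨b, hb, hb'⟩, h⟩ z
    refine ⟨h z, ?_⟩
    rintro (hz | hz)
    · rwa [IsUP_unique hz ha']
    · rwa [IsUP_unique hz hb']
instance (s t r : Env X → X) [Tm s] [Tm t] [Tm r] : Sd E k (fun v => IsPair E (s v) (t v) (r v)) :=
  Sd.s3 (P := IsPair E) (by simp only [IsPair_iff]; infer_instance) s t r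
instance (s t r : Env X → X) [Tm s] [Tm t] [Tm r] : Pd E k (fun v => IsPair E (s v) (t v) (r v)) :=
  Pd.s3 (P := IsPair E) (by simp only [IsPair_iff]; infer_instance) s t r
instance (s t r : Env X → X) [Tm s] [Tm t] [Tm r] : Sd E k (fun v => FunApp E (s v) (t v) (r v)) :=
  Sd.s3 (P := FunApp E) (by unfold FunApp; infer_instance) s t r
instance (s t r : Env X → X) [Tm s] [Tm t] [Tm r] : Pd E k (fun v => FunApp E (s v) (t v) (r v)) :=
  Pd.s3 (P := FunApp E) (by unfold FunApp; infer_instance) s t r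

theorem IsPair_ex (x y : X) : ∃ p, IsPair E p x y := by
  obtain ⟨a, ha⟩ := IsUP_ex (E := E) x x
  obtain ⟨b, hb⟩ := IsUP_ex (E := E) x y
  obtain ⟨p, hp⟩ := IsUP_ex (E := E) a b
  refine ⟨p, (IsPair_iff p x y).2 ⟨⟨a, hp.1, ha⟩, ⟨b, hp.2.1, hb⟩, fun z hz => ?_⟩⟩
  rcases hp.2.2 z hz with rfl | rfl
  · exact Or.inl ha
  · exact Or.inr hb
theorem IsPair_unique {p p' x y : X} (h : IsPair E p x y) (h' : IsPair E p' x y) : p = p' :=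
  MC.ext E fun w => (h w).trans (h' w).symm
theorem IsPair_inj {p x y x' y' : X} (h : IsPair E p x y) (h' : IsPair E p x' y') : x = x' ∧ y = y' := by
  have hx : x = x' := by
    obtain ⟨a, ha, ha'⟩ := ((IsPair_iff p x y).1 h).1
    rcases ((IsPair_iff p x' y').1 h').2.2 a ha with q | q <;>
    exact ((ha'.2.2 _ q.1).elim Eq.symm Eq.symm)
  subst hx
  refine ⟨rfl, ?_⟩
  obtain ⟨a, ha, ha'⟩ := ((IsPair_iff p x y).1 h).2.1
  obtain ⟨b, hb, hb'⟩ := ((IsPair_iff p x y').1 h').2.1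
  have h1 : y = x ∨ y = y' := by
    rcases ((IsPair_iff p x y').1 h').2.2 a ha with q | q
    · exact Or.inl ((q.2.2 y ha'.2.1).elim id id)
    · exact q.2.2 y ha'.2.1
  have h2 : y' = x ∨ y' = y := by
    rcases ((IsPair_iff p x y).1 h).2.2 b hb with q | q
    · exact Or.inl ((q.2.2 y' hb'.2.1).elim id id)
    · exact q.2.2 y' hb'.2.1
  rcases h1 with rfl | rfl
  · rcases h2 with rfl | rfl <;> rfl
  · rfl
end

/-! ## Separation, replacement, foundation -/
section
set_option linter.unusedSectionVars false
variable {E : X → X → Prop} [hE : MC E]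

theorem sepS1 (P : X → Prop) [h : Sd E 1 (fun v => P (gv 0 v))] (w : X) : ∃ y, ∀ x, E x y ↔ (E x w ∧ P x) := by
  obtain ⟨R, hR, hR'⟩ := h.out
  obtain ⟨n, p, ψ, hψ, h⟩ := hR.toSF (fun _ => w) w
  obtain ⟨y, hy⟩ := hE.most.2.1 (n+1) (.ex ψ) ⟨ψ, hψ, rfl⟩ (Fin.snoc p w) w
  refine ⟨y, fun x => (hy x).trans (and_congr_right fun _ => ?_)⟩
  refine Iff.trans ?_ (hR' (cns x (cns w (fun _ => w)))).symm
  simp only [SF.Eval, h, tl_cns, gv_cns_zero]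

theorem sepP1 (P : X → Prop) [h : Pd E 1 (fun v => P (gv 0 v))] (w : X) : ∃ y, ∀ x, E x y ↔ (E x w ∧ P x) := by
  obtain ⟨y, hy⟩ := sepS1 (E := E) (fun x => ¬ P x) w
  obtain ⟨z, hz⟩ := hE.most.1.1.2.2.2.2.1 w y
  refine ⟨z, fun x => ?_⟩
  rw [hz, hy]; tauto

theorem sgP1 {P : Env X → Prop} (h : Sd E 2 P) : ∃ Q : Env X → X → Prop,
    (Pd E 1 (fun w => Q (tl w) (gv 0 w))) ∧ ∀ v, P v ↔ ∃ y, Q v y := by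
  obtain ⟨Q, hQ, hQ'⟩ := h.out
  exact ⟨Q, ⟨hQ⟩, hQ'⟩

theorem strongColl (P : X → X → Prop) [h : Sd E 2 (fun v => P (gv 0 v) (gv 1 v))] (w : X)
    (hP : ∀ x, E x w → ∃ y, P x y) :
    ∃ c, (∀ x, E x w → ∃ y, E y c ∧ P x y) ∧ ∀ y, E y c → ∃ x, E x w ∧ P x y := by
  obtain ⟨Q, hQ, hQ'⟩ := sgP1 h
  let v0 : Env X := fun _ => w
  have e : ∀ x y, P x y ↔ ∃ u, Q (cns x (cns y v0)) u := fun x y => hQ' (cns x (cns y v0))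
  have i1 : Pd E 1 (fun v => Q (cns (gv 2 v) (cns (gv 1 v) v0)) (gv 0 v)) := by
    have h4 := hQ.subst (u4 (gv 0) (gv 2) (gv 1) (fun _ => w)) (u4Tm _ _ _ _)
    refine Pd.congr h4 (fun v => iff_of_eq ?_)
    have e4 : cns (gv 2 v) (cns (gv 1 v) v0) = tl (fun i => u4 (gv 0) (gv 2) (gv 1) (fun _ => w) i v) := by
      funext i; rcases i with _ | _ | i <;> rfl
    rw [e4]; rfl
  have i2 : Pd E 1 (fun v => ∃ y, E y (gv 0 v) ∧ ∃ u, E u (gv 0 v) ∧ Q (cns (gv 1 v) (cns y v0)) u) := by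
    have j : Pd E 1 (fun v => Q (cns (gv 1 (tl (tl v))) (cns (gv 0 (tl v)) v0)) (gv 0 v)) := 
      Pd.s3 (P := fun a b c => Q (cns c (cns b v0)) a) i1 (gv 0) (fun v => gv 0 (tl v)) (fun v => gv 1 (tl (tl v)))
    infer_instance
  obtain ⟨C, hC⟩ := collP1 E _ i2.out v0 w (by
    intro x hx
    obtain ⟨y, hy⟩ := hP x hx
    obtain ⟨u, hu⟩ := (e x y).1 hy
    obtain ⟨q, hq⟩ := IsUP_ex (E := E) y u
    exact ⟨q, y, hq.1, u, hq.2.1, hu⟩)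
  obtain ⟨D, hD⟩ := MC.union E C
  have j2 : Pd E 1 (fun v => ∃ x, E x w ∧ ∃ u, E u D ∧ Q (cns x (cns (gv 0 v) v0)) u) := by
    have j : Pd E 1 (fun v => Q (cns (gv 0 (tl v)) (cns (gv 0 (tl (tl v))) v0)) (gv 0 v)) := 
      Pd.s3 (P := fun a b c => Q (cns c (cns b v0)) a) i1 (gv 0) (fun v => gv 0 (tl (tl v))) (fun v => gv 0 (tl v))
    infer_instance
  obtain ⟨c, hc⟩ := sepP1 (E := E) (fun y => ∃ x, E x w ∧ ∃ u, E u D ∧ Q (cns x (cns y v0)) u) D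
  refine ⟨c, fun x hx => ?_, fun y hy => ?_⟩
  · obtain ⟨q, hqC, y, hy, u, hu, H⟩ := hC x hx
    exact ⟨y, (hc y).2 ⟨(hD y).2 ⟨q, hqC, hy⟩, x, hx, u, (hD u).2 ⟨q, hqC, hu⟩, H⟩, (e x y).2 ⟨u, H⟩⟩
  · obtain ⟨_, x, hx, u, _, H⟩ := (hc y).1 hy
    exact ⟨x, hx, (e x y).2 ⟨u, H⟩⟩

theorem repl (P : X → X → Prop) [h : Sd E 2 (fun v => P (gv 0 v) (gv 1 v))] (w : X)
    (hP : ∀ x, E x w → ∃ y, P x y) (hu : ∀ x, E x w → ∀ y y', P x y → P x y' → y = y') :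
    ∃ c, ∀ y, E y c ↔ ∃ x, E x w ∧ P x y := by
  obtain ⟨c, h1, h2⟩ := strongColl (E := E) P w hP
  refine ⟨c, fun y => ⟨h2 y, ?_⟩⟩
  rintro ⟨x, hx, hxy⟩
  obtain ⟨y', hy', hxy'⟩ := h1 x hx
  rwa [hu x hx y y' hxy hxy']

theorem sepD2 (P : X → Prop) [h : Sd E 2 (fun v => P (gv 0 v))] [h' : Pd E 2 (fun v => P (gv 0 v))] (w : X) :
    ∃ y, ∀ x, E x y ↔ (E x w ∧ P x) := by
  obtain ⟨z0, hz0⟩ := hE.most.1.1.2.1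
  by_cases hne : ∃ x0, E x0 w ∧ P x0
  · obtain ⟨x0, hx0, hPx0⟩ := hne
    have i1 : Sd E 2 (fun v => P (gv 1 v)) := Sd.s1 h (gv 1)
    have i2 : Pd E 2 (fun v => P (gv 1 v)) := Pd.s1 h' (gv 1)
    have i3 : Pd E 2 (fun v => P (gv 0 v)) := h'
    obtain ⟨c, hc⟩ := repl (E := E) (fun x y => (P x ∧ y = x) ∨ (¬ P x ∧ y = x0)) w (by
      intro x _
      by_cases hx : P x
      · exact ⟨x, Or.inl ⟨hx, rfl⟩⟩
      · exact ⟨x0, Or.inr ⟨hx, rfl⟩⟩) (by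
      rintro x _ y y' (⟨h1, rfl⟩ | ⟨h1, rfl⟩) (⟨h2, rfl⟩ | ⟨h2, rfl⟩)
      · rfl
      · exact absurd h1 h2
      · exact absurd h2 h1
      · rfl)
    refine ⟨c, fun x => (hc x).trans ?_⟩
    constructor
    · rintro ⟨x', hx', (⟨h1, rfl⟩ | ⟨h1, rfl⟩)⟩
      · exact ⟨hx', h1⟩
      · exact ⟨hx0, hPx0⟩
    · rintro ⟨h1, h2⟩
      exact ⟨x, h1, Or.inl ⟨h2, rfl⟩⟩
  · exact ⟨z0, fun x => ⟨fun hx => absurd hx (hz0 x), fun hx => absurd ⟨x, hx⟩ hne⟩⟩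

theorem inTrans (x : X) : ∃ t, TransSet E t ∧ E x t := by
  obtain ⟨a, ha⟩ := IsUP_ex (E := E) x x
  obtain ⟨t, ht, h⟩ := MC.tco E a
  exact ⟨t, ht, h x ha.1⟩

theorem found_aux (P : X → Prop) (hsep : ∀ w, ∃ y, ∀ x, E x y ↔ (E x w ∧ P x)) {x : X} (hx : P x) :
    ∃ y, P y ∧ ∀ z, E z y → ¬ P z := by
  obtain ⟨t, ht, hxt⟩ := inTrans (E := E) x
  obtain ⟨s, hs⟩ := hsep t
  obtain ⟨y, hy, hmin⟩ := MC.found E s ⟨x, (hs x).2 ⟨hxt, hx⟩⟩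
  exact ⟨y, ((hs y).1 hy).2, fun z hz hP => hmin z hz ((hs z).2 ⟨ht y ((hs y).1 hy).1 z hz, hP⟩)⟩

theorem foundS1 (P : X → Prop) [Sd E 1 (fun v => P (gv 0 v))] {x : X} (hx : P x) :
    ∃ y, P y ∧ ∀ z, E z y → ¬ P z := found_aux P (sepS1 P) hx
theorem foundD2 (P : X → Prop) [Sd E 2 (fun v => P (gv 0 v))] [Pd E 2 (fun v => P (gv 0 v))] {x : X} (hx : P x) :
    ∃ y, P y ∧ ∀ z, E z y → ¬ P z := found_aux P (sepD2 P) hx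

theorem irr (x : X) : ¬ E x x := by
  intro h
  obtain ⟨y, rfl, hy⟩ := foundS1 (E := E) (fun y => y = x) rfl
  exact hy y h rfl

theorem ord_comp {a b : X} (ha : IsOrdinal E a) (hb : IsOrdinal E b) : E a b ∨ a = b ∨ E b a := by
  by_contra hab
  obtain ⟨x, ⟨hx, y0, hy0, hn0⟩, hxm⟩ := foundS1 (E := E)
    (fun x => IsOrdinal E x ∧ ∃ y, IsOrdinal E y ∧ ¬ (E x y ∨ x = y ∨ E y x)) ⟨ha, b, hb, hab⟩
  obtain ⟨y, ⟨hy, hn⟩, hym⟩ := foundS1 (E := E)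
    (fun y => IsOrdinal E y ∧ ¬ (E x y ∨ x = y ∨ E y x)) ⟨hy0, hn0⟩
  have memOrd : ∀ {a z : X}, IsOrdinal E a → E z a → IsOrdinal E z := fun ha hz =>
    ⟨ha.2 _ hz, fun w hw => ha.2 w (ha.1 _ hz w hw)⟩
  apply hn
  refine Or.inr (Or.inl (MC.ext E fun z => ⟨fun hz => ?_, fun hz => ?_⟩))
  · by_contra hzy
    refine hxm z hz ⟨memOrd hx hz, y, hy, ?_⟩
    rintro (h | rfl | h)
    · exact hzy h
    · exact hn (Or.inr (Or.inr hz))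
    · exact hn (Or.inr (Or.inr (hx.1 z hz y h)))
  · by_contra hzx
    refine hym z hz ⟨memOrd hy hz, ?_⟩
    rintro (h | rfl | h)
    · exact hn (Or.inl (hy.1 z hz x h))
    · exact hn (Or.inl hz)
    · exact hzx h

theorem ord_mem {a z : X} (ha : IsOrdinal E a) (hz : E z a) : IsOrdinal E z :=
    ⟨ha.2 _ hz, fun w hw => ha.2 w (ha.1 _ hz w hw)⟩

theorem prod_ex (a b : X) : ∃ p, ∀ q, E q p ↔ ∃ x, E x a ∧ ∃ y, E y b ∧ IsPair E q x y := by
  have h1 : ∀ x, ∃ s, ∀ q, E q s ↔ ∃ y, E y b ∧ IsPair E q x y := fun x =>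
    repl (E := E) (fun y q => IsPair E q x y) b (fun y _ => IsPair_ex x y) (fun y _ _ _ h h' => IsPair_unique h h')
  obtain ⟨c, hc⟩ := repl (E := E) (fun x s => ∀ q, E q s ↔ ∃ y, E y b ∧ IsPair E q x y) a (fun x _ => h1 x)
    (fun x _ s s' h h' => MC.ext E fun q => (h q).trans (h' q).symm)
  obtain ⟨p, hp⟩ := MC.union E c
  refine ⟨p, fun q => (hp q).trans ⟨?_, ?_⟩⟩
  · rintro ⟨s, hs, hq⟩
    obtain ⟨x, hx, hxs⟩ := (hc s).1 hs
    obtain ⟨y, hy⟩ := (hxs q).1 hq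
    exact ⟨x, hx, y, hy⟩
  · rintro ⟨x, hx, y, hy⟩
    obtain ⟨s, hs⟩ := h1 x
    exact ⟨s, (hc s).2 ⟨x, hx, hs⟩, (hs q).2 ⟨y, hy⟩⟩

/-- adjoining an element -/
theorem adj_ex (a x : X) : ∃ p, ∀ q, E q p ↔ (E q a ∨ q = x) := by
  obtain ⟨s, hs⟩ := IsUP_ex (E := E) x x
  obtain ⟨t, ht⟩ := IsUP_ex (E := E) a s
  obtain ⟨p, hp⟩ := MC.union E t
  refine ⟨p, fun q => (hp q).trans ⟨?_, ?_⟩⟩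
  · rintro ⟨y, hy, hq⟩
    rcases ht.2.2 y hy with rfl | rfl
    · exact Or.inl hq
    · exact Or.inr ((hs.2.2 q hq).elim id id)
  · rintro (h | rfl)
    · exact ⟨a, ht.1, h⟩
    · exact ⟨s, ht.2.1, hs.1⟩

/-- A choice relation on nonempty subsets of `A`. -/
def Ch (E : X → X → Prop) (c u y : X) : Prop := E y u ∧ FunApp E c u y

instance {k : ℕ} [Lv k] (c s t : Env X → X) [Tm c] [Tm s] [Tm t] : Sd E k (fun v => Ch E (c v) (s v) (t v)) :=
  Sd.s3 (P := Ch E) (by unfold Ch; infer_instance) c s t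
instance {k : ℕ} [Lv k] (c s t : Env X → X) [Tm c] [Tm s] [Tm t] : Pd E k (fun v => Ch E (c v) (s v) (t v)) :=
  Pd.s3 (P := Ch E) (by unfold Ch; infer_instance) c s t

theorem choice_ex (A : X) : ∃ c, (∀ u, SubE E u A → (∃ z, E z u) → ∃ y, Ch E c u y) ∧
    ∀ u y y', SubE E u A → Ch E c u y → Ch E c u y' → y = y' := by
  obtain ⟨pA, hpA⟩ := MC.power E A
  obtain ⟨w, hw⟩ := sepS1 (E := E) (fun u => ∃ z, E z u) pA
  have h1 : ∀ x, ∃ s, ∀ q, E q s ↔ ∃ y, E y x ∧ IsPair E q x y := fun x =>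
    repl (E := E) (fun y q => IsPair E q x y) x (fun y _ => IsPair_ex x y) (fun y _ _ _ h h' => IsPair_unique h h')
  obtain ⟨a, ha⟩ := repl (E := E) (fun x s => ∀ q, E q s ↔ ∃ y, E y x ∧ IsPair E q x y) w (fun x _ => h1 x)
    (fun x _ s s' h h' => MC.ext E fun q => (h q).trans (h' q).symm)
  obtain ⟨c, hc⟩ := hE.most.2.2 a (by
    intro s hs
    obtain ⟨u, hu, hus⟩ := (ha s).1 hs
    obtain ⟨z, hz⟩ := ((hw u).1 hu).2
    obtain ⟨q, hq⟩ := IsPair_ex (E := E) u z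
    exact ⟨q, (hus q).2 ⟨z, hz, hq⟩⟩) (by
    intro s s' hs hs' hne q hq hq'
    obtain ⟨u, hu, hus⟩ := (ha s).1 hs
    obtain ⟨u', hu', hus'⟩ := (ha s').1 hs'
    obtain ⟨y, hy, hp⟩ := (hus q).1 hq
    obtain ⟨y', hy', hp'⟩ := (hus' q).1 hq'
    obtain ⟨rfl, rfl⟩ := IsPair_inj hp hp'
    exact hne (MC.ext E fun q => (hus q).trans (hus' q).symm))
  refine ⟨c, fun u hu hne => ?_, fun u y y' hu hy hy' => ?_⟩
  · obtain ⟨s, hs⟩ := h1 u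
    obtain ⟨q, ⟨hqc, hqs⟩, _⟩ := hc s ((ha s).2 ⟨u, (hw u).2 ⟨(hpA u).2 hu, hne⟩, hs⟩)
    obtain ⟨y, hy, hp⟩ := (hs q).1 hqs
    exact ⟨y, hy, q, hqc, hp⟩
  · obtain ⟨s, hs⟩ := h1 u
    obtain ⟨q0, _, h0⟩ := hc s ((ha s).2 ⟨u, (hw u).2 ⟨(hpA u).2 hu, y, hy.1⟩, hs⟩)
    obtain ⟨hyu, q, hq, hp⟩ := hy
    obtain ⟨hyu', q', hq', hp'⟩ := hy'
    have e1 := h0 q ⟨hq, (hs q).2 ⟨y, hyu, hp⟩⟩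
    have e2 := h0 q' ⟨hq', (hs q').2 ⟨y', hyu', hp'⟩⟩
    subst e1; subst e2
    exact (IsPair_inj hp hp').2
end

/-! ## The well-ordering theorem -/
section
set_option linter.unusedSectionVars false
variable {E : X → X → Prop} [hE : MC E]

theorem FunApp_of_pairs {f : X} {R : X → X → Prop} (h : ∀ q, E q f ↔ ∃ a b, IsPair E q a b ∧ R a b) (a b : X) :
    FunApp E f a b ↔ R a b := by
  constructor
  · rintro ⟨q, hq, hp⟩
    obtain ⟨a', b', hp', hR⟩ := (h q).1 hq
    obtain ⟨rfl, rfl⟩ := IsPair_inj hp hp'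
    exact hR
  · intro hR
    obtain ⟨q, hq⟩ := IsPair_ex (E := E) a b
    exact ⟨q, (h q).2 ⟨a, b, hq, hR⟩, hq⟩

theorem FunApp_adj {f f' q a b : X} (hq : IsPair E q a b) (h : ∀ r, E r f' ↔ (E r f ∨ r = q)) (x y : X) :
    FunApp E f' x y ↔ (FunApp E f x y ∨ (x = a ∧ y = b)) := by
  constructor
  · rintro ⟨r, hr, hp⟩
    rcases (h r).1 hr with h1 | rfl
    · exact Or.inl ⟨r, h1, hp⟩
    · exact Or.inr (IsPair_inj hp hq)
  · rintro (⟨r, hr, hp⟩ | ⟨rfl, rfl⟩)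
    · exact ⟨r, (h r).2 (Or.inl hr), hp⟩
    · exact ⟨q, (h q).2 (Or.inr rfl), hq⟩

def ZB (E : X → X → Prop) (A c s β y : X) : Prop :=
  IsOrdinal E β ∧ (∀ γ, E γ β → ∃ z, FunApp E s γ z) ∧
    ∃ u, SubE E u A ∧ (∀ z, E z A → (E z u ↔ ¬ ∃ γ, E γ β ∧ FunApp E s γ z)) ∧ Ch E c u y

def ZJ (E : X → X → Prop) (A c s : X) : Prop := ∀ q, E q s → ∃ β y, IsPair E q β y ∧ ZB E A c s β y
def ZV (E : X → X → Prop) (A c β y : X) : Prop := ∃ s, ZJ E A c s ∧ FunApp E s β y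

instance {k : ℕ} [Lv k] (A c : X) (r s t : Env X → X) [Tm r] [Tm s] [Tm t] :
    Sd E k (fun v => ZB E A c (r v) (s v) (t v)) :=
  Sd.s3 (P := ZB E A c) (by unfold ZB; infer_instance) r s t
instance {k : ℕ} [Lv k] (A c : X) (r : Env X → X) [Tm r] : Sd E k (fun v => ZJ E A c (r v)) :=
  Sd.s1 (P := ZJ E A c) (by unfold ZJ; infer_instance) r
instance {k : ℕ} [Lv k] (A c : X) (s t : Env X → X) [Tm s] [Tm t] :
    Sd E k (fun v => ZV E A c (s v) (t v)) :=
  Sd.s2 (P := ZV E A c) (by unfold ZV; infer_instance) s t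

theorem ZJ.body {A c s β y : X} (h : ZJ E A c s) (h' : FunApp E s β y) : ZB E A c s β y := by
  obtain ⟨q, hq, hp⟩ := h'
  obtain ⟨β', y', hp', hB⟩ := h q hq
  obtain ⟨rfl, rfl⟩ := IsPair_inj hp hp'
  exact hB

theorem ZV_unique {A c : X} (hc : ∀ u y y', SubE E u A → Ch E c u y → Ch E c u y' → y = y') {β y y' : X}
    (h : ZV E A c β y) (h' : ZV E A c β y') : y = y' := by
  by_contra hne
  obtain ⟨β, ⟨y, y', hne, ⟨s, hs, hsy⟩, s', hs', hsy'⟩, hmin⟩ := foundS1 (E := E)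
    (fun β => ∃ y y', ¬ y = y' ∧ ZV E A c β y ∧ ZV E A c β y') ⟨y, y', hne, h, h'⟩
  obtain ⟨_, h1, u, hu, hu1, hu2⟩ := hs.body hsy
  obtain ⟨_, h1', u', hu', hu1', hu2'⟩ := hs'.body hsy'
  have key : ∀ γ, E γ β → ∀ z, FunApp E s γ z ↔ FunApp E s' γ z := by
    intro γ hγ z
    obtain ⟨z1, hz1⟩ := h1 γ hγ
    obtain ⟨z2, hz2⟩ := h1' γ hγ
    have e : ∀ a b, FunApp E s γ a → FunApp E s' γ b → a = b := by
      intro a b ha hb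
      by_contra hab
      exact hmin γ hγ ⟨a, b, hab, ⟨s, hs, ha⟩, s', hs', hb⟩
    constructor
    · intro hz; rwa [e z z2 hz hz2]
    · intro hz; rwa [← e z1 z hz1 hz]
  have : u = u' := by
    refine MC.ext E fun z => ⟨fun hz => ?_, fun hz => ?_⟩
    · refine (hu1' z (hu z hz)).2 ?_
      rintro ⟨γ, hγ, hz'⟩
      exact (hu1 z (hu z hz)).1 hz ⟨γ, hγ, (key γ hγ z).2 hz'⟩
    · refine (hu1 z (hu' z hz)).2 ?_
      rintro ⟨γ, hγ, hz'⟩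
      exact (hu1' z (hu' z hz)).1 hz ⟨γ, hγ, (key γ hγ z).1 hz'⟩
  subst this
  exact hne (hc u y y' hu hu2 hu2')

theorem ZV_body {A c : X} (hc : ∀ u y y', SubE E u A → Ch E c u y → Ch E c u y' → y = y') {β y : X}
    (h : ZV E A c β y) : IsOrdinal E β ∧ (∀ γ, E γ β → ∃ z, ZV E A c γ z) ∧
    ∃ u, SubE E u A ∧ (∀ z, E z A → (E z u ↔ ¬ ∃ γ, E γ β ∧ ZV E A c γ z)) ∧ Ch E c u y := by
  obtain ⟨s, hs, hsy⟩ := h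
  obtain ⟨h0, h1, u, hu, hu1, hu2⟩ := hs.body hsy
  refine ⟨h0, fun γ hγ => ?_, u, hu, fun z hz => ?_, hu2⟩
  · obtain ⟨z, hz⟩ := h1 γ hγ
    exact ⟨z, s, hs, hz⟩
  · rw [hu1 z hz]
    refine not_congr (exists_congr fun γ => and_congr_right fun hγ => ⟨fun h => ⟨s, hs, h⟩, fun h => ?_⟩)
    obtain ⟨z', hz'⟩ := h1 γ hγ
    rwa [ZV_unique hc h ⟨s, hs, hz'⟩]

theorem ZV_inj {A c : X} (hc : ∀ u y y', SubE E u A → Ch E c u y → Ch E c u y' → y = y') {β β' y : X}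
    (h : ZV E A c β y) (h' : ZV E A c β' y) : β = β' := by
  have key : ∀ {β β'}, ZV E A c β y → ZV E A c β' y → ¬ E β β' := by
    intro β β' h h' hm
    obtain ⟨_, _, u, hu, hu1, hu2⟩ := ZV_body hc h'
    exact (hu1 y (hu y hu2.1)).1 hu2.1 ⟨β, hm, h⟩
  rcases ord_comp (ZV_body hc h).1 (ZV_body hc h').1 with g | g | g
  · exact absurd g (key h h')
  · exact g
  · exact absurd g (key h' h)

theorem zermelo (A : X) : ∃ D F, IsOrdinal E D ∧ (∀ a y y', FunApp E F a y → FunApp E F a y' → y = y') ∧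
    ∀ y, E y A → ∃ a, E a D ∧ FunApp E F a y := by
  obtain ⟨c, hc1, hc⟩ := choice_ex (E := E) A
  obtain ⟨B, hB⟩ := sepS1 (E := E) (fun y => ∃ β, ZV E A c β y) A
  obtain ⟨D, hD⟩ := repl (E := E) (fun y β => ZV E A c β y) B (fun y hy => ((hB y).1 hy).2)
    (fun y _ β β' h h' => ZV_inj hc h h')
  have hD' : ∀ β, E β D ↔ ∃ y, ZV E A c β y := by
    intro β
    rw [hD]
    constructor
    · rintro ⟨y, _, h⟩; exact ⟨y, h⟩
    · rintro ⟨y, h⟩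
      obtain ⟨_, _, u, hu, _, hu2⟩ := ZV_body hc h
      exact ⟨y, (hB y).2 ⟨hu y hu2.1, β, h⟩, h⟩
  have hDo : IsOrdinal E D := by
    refine ⟨fun β hβ γ hγ => ?_, fun β hβ => ?_⟩
    · obtain ⟨y, hy⟩ := (hD' β).1 hβ
      exact (hD' γ).2 ((ZV_body hc hy).2.1 γ hγ)
    · obtain ⟨y, hy⟩ := (hD' β).1 hβ
      exact (ZV_body hc hy).1.1
  obtain ⟨F, hF⟩ := repl (E := E) (fun y q => ∃ β, ZV E A c β y ∧ IsPair E q β y) B (by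
    intro y hy
    obtain ⟨β, hβ⟩ := ((hB y).1 hy).2
    obtain ⟨q, hq⟩ := IsPair_ex (E := E) β y
    exact ⟨q, β, hβ, hq⟩) (by
    rintro y _ q q' ⟨β, h1, h2⟩ ⟨β', h1', h2'⟩
    obtain rfl := ZV_inj hc h1 h1'
    exact IsPair_unique h2 h2')
  have hF' : ∀ β y, FunApp E F β y ↔ ZV E A c β y := by
    refine FunApp_of_pairs fun q => (hF q).trans ⟨?_, ?_⟩
    · rintro ⟨y, _, β, h1, h2⟩; exact ⟨β, y, h2, h1⟩
    · rintro ⟨β, y, h2, h1⟩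
      obtain ⟨_, _, u, hu, _, hu2⟩ := ZV_body hc h1
      exact ⟨y, (hB y).2 ⟨hu y hu2.1, β, h1⟩, β, h1, h2⟩
  refine ⟨D, F, hDo, fun a y y' h h' => ZV_unique hc ((hF' _ _).1 h) ((hF' _ _).1 h'), fun y hy => ?_⟩
  suffices h : E y B by
    obtain ⟨β, hβ⟩ := ((hB y).1 h).2
    exact ⟨β, (hD' β).2 ⟨y, hβ⟩, (hF' _ _).2 hβ⟩
  by_contra hyB
  obtain ⟨u0, hu0⟩ := sepS1 (E := E) (fun z => ¬ E z B) A
  obtain ⟨y1, hy1⟩ := hc1 u0 (fun z hz => ((hu0 z).1 hz).1) ⟨y, (hu0 y).2 ⟨hy, hyB⟩⟩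
  obtain ⟨q1, hq1⟩ := IsPair_ex (E := E) D y1
  obtain ⟨F1, hF1⟩ := adj_ex (E := E) F q1
  have hA1 := FunApp_adj hq1 hF1
  have hsm : ∀ γ, E γ D → ∀ z, FunApp E F1 γ z ↔ ZV E A c γ z := by
    intro γ hγ z
    rw [hA1, hF']
    constructor
    · rintro (h | ⟨rfl, _⟩)
      · exact h
      · exact absurd hγ (irr _)
    · exact Or.inl
  have hJ : ZJ E A c F1 := by
    intro q hq
    rcases (hF1 q).1 hq with h | rfl
    · obtain ⟨y, hy, β, h1, h2⟩ := (hF q).1 h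
      obtain ⟨g0, g1, u, g2, g3, g4⟩ := ZV_body hc h1
      have hβD : E β D := (hD' β).2 ⟨y, h1⟩
      refine ⟨β, y, h2, g0, fun γ hγ => ?_, u, g2, fun z hz => ?_, g4⟩
      · simpa only [hsm γ (hDo.1 β hβD γ hγ)] using g1 γ hγ
      · rw [g3 z hz]
        exact not_congr (exists_congr fun γ => and_congr_right fun hγ =>
          (hsm γ (hDo.1 β hβD γ hγ) z).symm)
    · refine ⟨D, y1, hq1, hDo, fun γ hγ => ?_, u0, fun z hz => ((hu0 z).1 hz).1, fun z hz => ?_, hy1⟩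
      · simpa only [hsm γ hγ] using (hD' γ).1 hγ
      · rw [hu0, hB]
        constructor
        · rintro ⟨_, h⟩ ⟨γ, hγ, h'⟩
          exact h ⟨hz, γ, (hsm γ hγ z).1 h'⟩
        · intro h
          refine ⟨hz, ?_⟩
          rintro ⟨_, γ, hγ⟩
          have : E γ D := (hD' γ).2 ⟨z, hγ⟩
          exact h ⟨γ, this, (hsm γ this z).2 hγ⟩
  exact irr D ((hD' D).2 ⟨y1, F1, hJ, (hA1 _ _).2 (Or.inr ⟨rfl, rfl⟩)⟩)
end

/-! ## The stratification of the universe -/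
section
set_option linter.unusedSectionVars false
variable {E : X → X → Prop} [hE : MC E]

/-- `t` is transitive and `f` is a partial map of `α` onto `t`. -/
def Cov (E : X → X → Prop) (α t f : X) : Prop :=
  TransSet E t ∧ (∀ a, E a α → ∀ y, E y t → ∀ y', E y' t → FunApp E f a y → FunApp E f a y' → y = y') ∧
    ∀ y, E y t → ∃ a, E a α ∧ FunApp E f a y

def InG (E : X → X → Prop) (α x : X) : Prop := ∃ t f, Cov E α t f ∧ E x t

def CdRel (E : X → X → Prop) (t f a b : X) : Prop :=
  ∃ x, E x t ∧ ∃ y, E y t ∧ FunApp E f a x ∧ FunApp E f b y ∧ (a = b ∨ E x y)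

def Cd (E : X → X → Prop) (α R t f : X) : Prop :=
  Cov E α t f ∧ ∀ a, E a α → ∀ b, E b α → (FunApp E R a b ↔ CdRel E t f a b)

instance {k : ℕ} [Lv k] (r s t : Env X → X) [Tm r] [Tm s] [Tm t] :
    Sd E k (fun v => Cov E (r v) (s v) (t v)) :=
  Sd.s3 (P := Cov E) (by unfold Cov; infer_instance) r s t
instance {k : ℕ} [Lv k] (r s t : Env X → X) [Tm r] [Tm s] [Tm t] :
    Pd E k (fun v => Cov E (r v) (s v) (t v)) :=
  Pd.s3 (P := Cov E) (by unfold Cov; infer_instance) r s t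
instance {k : ℕ} [Lv k] (s t : Env X → X) [Tm s] [Tm t] :
    Sd E k (fun v => InG E (s v) (t v)) :=
  Sd.s2 (P := InG E) (by unfold InG; infer_instance) s t
instance {k : ℕ} [Lv k] (q r s t : Env X → X) [Tm q] [Tm r] [Tm s] [Tm t] :
    Sd E k (fun v => CdRel E (q v) (r v) (s v) (t v)) :=
  Sd.s4 (P := CdRel E) (by unfold CdRel; infer_instance) q r s t
instance {k : ℕ} [Lv k] (q r s t : Env X → X) [Tm q] [Tm r] [Tm s] [Tm t] :
    Pd E k (fun v => CdRel E (q v) (r v) (s v) (t v)) :=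
  Pd.s4 (P := CdRel E) (by unfold CdRel; infer_instance) q r s t
instance {k : ℕ} [Lv k] (q r s t : Env X → X) [Tm q] [Tm r] [Tm s] [Tm t] :
    Sd E k (fun v => Cd E (q v) (r v) (s v) (t v)) :=
  Sd.s4 (P := Cd E) (by unfold Cd; infer_instance) q r s t

theorem Cd_sub {α R t f t' f' : X} (h : Cd E α R t f) (h' : Cd E α R t' f') {x : X} (hx : E x t) : E x t' := by
  by_contra hx'
  obtain ⟨a0, ha0, hfa0⟩ := h.1.2.2 x hx
  obtain ⟨x, ⟨hx, a, ha, hax, hn⟩, hmin⟩ := foundS1 (E := E)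
    (fun x => E x t ∧ ∃ a, E a α ∧ FunApp E f a x ∧ ¬ (E x t' ∧ FunApp E f' a x))
    ⟨hx, a0, ha0, hfa0, fun h => hx' h.1⟩
  have hR : FunApp E R a a := (h.2 a ha a ha).2 ⟨x, hx, x, hx, hax, hax, Or.inl rfl⟩
  obtain ⟨x', hx', _, _, hax', _, _⟩ := (h'.2 a ha a ha).1 hR
  apply hn
  suffices e : x = x' by rw [e]; exact ⟨hx', hax'⟩
  have hmin' : ∀ z, E z x → ∀ b, E b α → FunApp E f b z → E z t' ∧ FunApp E f' b z := by
    intro z hz b hb hbz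
    by_contra hcon
    exact hmin z hz ⟨h.1.1 x hx z hz, b, hb, hbz, hcon⟩
  refine MC.ext E fun z => ⟨fun hz => ?_, fun hz => ?_⟩
  · have hzt := h.1.1 x hx z hz
    obtain ⟨b, hb, hbz⟩ := h.1.2.2 z hzt
    obtain ⟨hzt', hbz'⟩ := hmin' z hz b hb hbz
    have hR := (h.2 b hb a ha).2 ⟨z, hzt, x, hx, hbz, hax, Or.inr hz⟩
    obtain ⟨x1, hx1, y1, hy1, hb1, ha1, hor⟩ := (h'.2 b hb a ha).1 hR
    obtain rfl := h'.1.2.1 b hb _ hx1 _ hzt' hb1 hbz'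
    obtain rfl := h'.1.2.1 a ha _ hy1 _ hx' ha1 hax'
    rcases hor with rfl | hor
    · obtain rfl := h.1.2.1 _ ha _ hx _ hzt hax hbz
      exact absurd hz (irr _)
    · exact hor
  · have hzt' := h'.1.1 x' hx' z hz
    obtain ⟨b, hb, hbz'⟩ := h'.1.2.2 z hzt'
    have hR := (h'.2 b hb a ha).2 ⟨z, hzt', x', hx', hbz', hax', Or.inr hz⟩
    obtain ⟨x1, hx1, y1, hy1, hb1, ha1, hor⟩ := (h.2 b hb a ha).1 hR
    obtain rfl := h.1.2.1 a ha _ hy1 _ hx ha1 hax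
    rcases hor with rfl | hor
    · obtain rfl := h'.1.2.1 _ ha _ hx' _ hzt' hax' hbz'
      exact absurd hz (irr _)
    · obtain ⟨h1, h2⟩ := hmin' x1 hor b hb hb1
      obtain rfl := h'.1.2.1 b hb _ h1 _ hzt' h2 hbz'
      exact hor

theorem Cd_unique {α R t f t' f' : X} (h : Cd E α R t f) (h' : Cd E α R t' f') : t = t' :=
  MC.ext E fun _ => ⟨Cd_sub h h', Cd_sub h' h⟩

def IsG (E : X → X → Prop) (A α : X) : Prop := ∀ x, E x A ↔ InG E α x

theorem IsG_iff (A α : X) : IsG E A α ↔ (∀ x, E x A → InG E α x) ∧ ∀ x t f, Cov E α t f ∧ E x t → E x A := by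
  unfold IsG
  constructor
  · intro h
    exact ⟨fun x hx => (h x).1 hx, fun x t f hx => (h x).2 ⟨t, f, hx⟩⟩
  · rintro ⟨h1, h2⟩ x
    exact ⟨h1 x, fun ⟨t, f, hx⟩ => h2 x t f hx⟩

instance (s t : Env X → X) [Tm s] [Tm t] : Sd E 2 (fun v => IsG E (s v) (t v)) :=
  Sd.s2 (P := IsG E) (by simp only [IsG_iff]; infer_instance) s t

theorem IsG_unique {A A' α : X} (h : IsG E A α) (h' : IsG E A' α) : A = A' :=
  MC.ext E fun x => (h x).trans (h' x).symm

theorem IsG_ex (α : X) : ∃ A, IsG E A α := by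
  obtain ⟨αα, hαα⟩ := prod_ex (E := E) α α
  obtain ⟨p, hp⟩ := MC.power E αα
  obtain ⟨Rs, hRs⟩ := sepS1 (E := E) (fun R => ∃ t f, Cd E α R t f) p
  obtain ⟨c, hc⟩ := repl (E := E) (fun R t => ∃ f, Cd E α R t f) Rs (fun R hR => ((hRs R).1 hR).2)
    (fun R _ t t' ⟨f, h⟩ ⟨f', h'⟩ => Cd_unique h h')
  obtain ⟨U, hU⟩ := MC.union E c
  refine ⟨U, fun x => (hU x).trans ⟨?_, ?_⟩⟩
  · rintro ⟨t, ht, hx⟩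
    obtain ⟨R, _, f, hf⟩ := (hc t).1 ht
    exact ⟨t, f, hf.1, hx⟩
  · rintro ⟨t, f, hf, hx⟩
    obtain ⟨R, hR⟩ := sepS1 (E := E) (fun q => ∃ a b, IsPair E q a b ∧ CdRel E t f a b) αα
    have hCd : Cd E α R t f := by
      refine ⟨hf, fun a ha b hb => ⟨?_, fun h => ?_⟩⟩
      · rintro ⟨q, hq, hp⟩
        obtain ⟨_, a', b', hp', h⟩ := (hR q).1 hq
        obtain ⟨rfl, rfl⟩ := IsPair_inj hp hp'
        exact h
      · obtain ⟨q, hq⟩ := IsPair_ex (E := E) a b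
        exact ⟨q, (hR q).2 ⟨(hαα q).2 ⟨a, ha, b, hb, hq⟩, a, b, hq, h⟩, hq⟩
    exact ⟨t, (hc t).2 ⟨R, (hRs R).2 ⟨(hp R).2 fun q hq => ((hR q).1 hq).1, t, f, hCd⟩, f, hCd⟩, hx⟩

theorem InG_all (c : X) : ∃ κ, IsOrdinal E κ ∧ InG E κ c ∧ ∀ x, E x c → InG E κ x := by
  obtain ⟨t, ht, hct⟩ := inTrans (E := E) c
  obtain ⟨D, F, hD, hF, hs⟩ := zermelo (E := E) t
  have : Cov E D t F := ⟨ht, fun a _ y _ y' _ h h' => hF a y y' h h', hs⟩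
  exact ⟨D, hD, ⟨t, F, this, hct⟩, fun x hx => ⟨t, F, this, ht c hct x hx⟩⟩

/-! ## A `Δ₂` relation and its closure stages -/
def Rl (P : X → X → Prop) (x y : X) : Prop := P x y

class DP (E : X → X → Prop) (P : X → X → Prop) : Prop where
  s : Sd E 2 (fun v => P (gv 0 v) (gv 1 v))
  p : Pd E 2 (fun v => P (gv 0 v) (gv 1 v))

instance (P : X → X → Prop) [h : DP E P] (s t : Env X → X) [Tm s] [Tm t] :
    Sd E 2 (fun v => Rl P (s v) (t v)) := Sd.s2 (P := P) h.s s t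
instance (P : X → X → Prop) [h : DP E P] (s t : Env X → X) [Tm s] [Tm t] :
    Pd E 2 (fun v => Rl P (s v) (t v)) := Pd.s2 (P := P) h.p s t

def Good (E : X → X → Prop) (P : X → X → Prop) (A κ : X) : Prop :=
  ∀ x, E x A → ∃ y, InG E κ y ∧ Rl P x y

theorem Good_iff (P : X → X → Prop) (A κ : X) : Good E P A κ ↔
    ∀ B, IsG E B κ → ∀ x, E x A → ∃ y, E y B ∧ Rl P x y := by
  constructor
  · intro h B hB x hx
    obtain ⟨y, hy, h'⟩ := h x hx
    exact ⟨y, (hB y).2 hy, h'⟩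
  · intro h x hx
    obtain ⟨B, hB⟩ := IsG_ex (E := E) κ
    obtain ⟨y, hy, h'⟩ := h B hB x hx
    exact ⟨y, (hB y).1 hy, h'⟩

instance (P : X → X → Prop) [h : DP E P] (s t : Env X → X) [Tm s] [Tm t] :
    Sd E 2 (fun v => Good E P (s v) (t v)) := Sd.s2 (P := Good E P) (by unfold Good; infer_instance) s t
instance (P : X → X → Prop) [h : DP E P] (s t : Env X → X) [Tm s] [Tm t] :
    Pd E 2 (fun v => Good E P (s v) (t v)) := Pd.s2 (P := Good E P) (by simp only [Good_iff]; infer_instance) s t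

def StepA (E : X → X → Prop) (P : X → X → Prop) (A B : X) : Prop :=
  ∃ κ, IsOrdinal E κ ∧ IsG E B κ ∧ Good E P A κ ∧ ∀ κ', E κ' κ → ¬ Good E P A κ'

instance (P : X → X → Prop) [h : DP E P] (s t : Env X → X) [Tm s] [Tm t] :
    Sd E 2 (fun v => StepA E P (s v) (t v)) := Sd.s2 (P := StepA E P) (by unfold StepA; infer_instance) s t

theorem StepA_ex (P : X → X → Prop) [h : DP E P] (hP : ∀ x, ∃ y, P x y) (A : X) : ∃ B, StepA E P A B := by
  obtain ⟨c, hc, _⟩ := strongColl (E := E) (Rl P) A (fun x _ => hP x)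
  obtain ⟨κ, hκ, _, hκc⟩ := InG_all (E := E) c
  have hg : Good E P A κ := by
    intro x hx
    obtain ⟨y, hy, h⟩ := hc x hx
    exact ⟨y, hκc y hy, h⟩
  obtain ⟨κ, ⟨hκ, hg⟩, hmin⟩ := foundD2 (E := E) (fun κ => IsOrdinal E κ ∧ Good E P A κ) ⟨hκ, hg⟩
  obtain ⟨B, hB⟩ := IsG_ex (E := E) κ
  exact ⟨B, κ, hκ, hB, hg, fun κ' h h' => hmin κ' h ⟨ord_mem hκ h, h'⟩⟩

theorem StepA_unique (P : X → X → Prop) {A B B' : X} (h : StepA E P A B) (h' : StepA E P A B') : B = B' := by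
  obtain ⟨κ, h1, h2, h3, h4⟩ := h
  obtain ⟨κ', h1', h2', h3', h4'⟩ := h'
  rcases ord_comp h1 h1' with g | rfl | g
  · exact absurd h3 (h4' κ g)
  · exact IsG_unique h2 h2'
  · exact absurd h3' (h4 κ' g)

theorem StepA_prop (P : X → X → Prop) {A B : X} (h : StepA E P A B) : ∀ x, E x A → ∃ y, E y B ∧ P x y := by
  obtain ⟨κ, h1, h2, h3, h4⟩ := h
  exact (Good_iff P A κ).1 h3 B h2
end

/-! ## `Δ₀^𝒫` formulas are `Δ₂` -/
section
set_option linter.unusedSectionVars false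
variable {E : X → X → Prop} [hE : MC E]

theorem snoc_env {n : ℕ} (t : Fin n → Env X → X) (w : Env X) :
    (Fin.snoc (fun i => t i (tl w)) (gv 0 w) : Fin (n+1) → X) =
      fun i => (Fin.snoc (fun i w => t i (tl w)) (gv 0) : Fin (n+1) → Env X → X) i w := by
  funext i
  refine Fin.lastCases ?_ (fun i => ?_) i
  · simp
  · simp

theorem snoc_tm {n : ℕ} (t : Fin n → Env X → X) (ht : ∀ i, Tm (t i)) (i : Fin (n + 1)) :
    Tm ((Fin.snoc (fun i w => t i (tl w)) (gv 0) : Fin (n+1) → Env X → X) i) := by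
  refine Fin.lastCases ?_ (fun i => ?_) i
  · simp only [Fin.snoc_last]; infer_instance
  · simp only [Fin.snoc_castSucc]
    have := ht i
    exact Tm.comp (t := t i) (u := fun i w => w (i+1)) (fun i => ⟨Sum.inr (i+1), fun v => rfl⟩)

theorem pow_ex_iff (a : X) (Q : X → Prop) : (∃ x, SubE E x a ∧ Q x) ↔
    ∀ p, (∀ z, E z p ↔ SubE E z a) → ∃ x, E x p ∧ Q x := by
  constructor
  · rintro ⟨x, hx, h⟩ p hp
    exact ⟨x, (hp x).2 hx, h⟩
  · intro h
    obtain ⟨p, hp⟩ := MC.power E a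
    obtain ⟨x, hx, h⟩ := h p hp
    exact ⟨x, (hp x).1 hx, h⟩

theorem pow_all_iff (a : X) (Q : X → Prop) : (∀ x, SubE E x a → Q x) ↔
    ∃ p, (∀ z, E z p ↔ SubE E z a) ∧ ∀ x, E x p → Q x := by
  constructor
  · intro h
    obtain ⟨p, hp⟩ := MC.power E a
    exact ⟨p, hp, fun x hx => h x ((hp x).1 hx)⟩
  · rintro ⟨p, hp, h⟩ x hx
    exact h x ((hp x).2 hx)

def uSk : ℕ → Env X → X
  | 0 => gv 0
  | i + 1 => fun w => w (i + 2)
theorem uSk_tm (i : ℕ) : Tm (uSk i : Env X → X) := by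
  cases i with
  | zero => exact (inferInstance : Tm (gv 0))
  | succ i => exact ⟨Sum.inr (i + 2), fun v => rfl⟩

theorem delta0P_D2 {n : ℕ} (φ : SF n) : φ.IsDelta0P → ∀ t : Fin n → Env X → X, (∀ i, Tm (t i)) →
    Sd E 2 (fun v => φ.Eval E (fun i => t i v)) ∧ Pd E 2 (fun v => φ.Eval E (fun i => t i v)) := by
  induction φ with
  | mem i j =>
    intro _ t ht
    have := ht i; have := ht j
    constructor <;> (simp only [SF.Eval]; infer_instance)
  | eq i j =>
    intro _ t ht
    have := ht i; have := ht j
    constructor <;> (simp only [SF.Eval]; infer_instance)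
  | not φ ih =>
    intro h t ht
    obtain ⟨h1, h2⟩ := ih h t ht
    constructor <;> (simp only [SF.Eval]; infer_instance)
  | and φ ψ ih ih' =>
    intro h t ht
    obtain ⟨h1, h2⟩ := ih h.1 t ht
    obtain ⟨h1', h2'⟩ := ih' h.2 t ht
    constructor <;> (simp only [SF.Eval]; infer_instance)
  | or φ ψ ih ih' =>
    intro h t ht
    obtain ⟨h1, h2⟩ := ih h.1 t ht
    obtain ⟨h1', h2'⟩ := ih' h.2 t ht
    constructor <;> (simp only [SF.Eval]; infer_instance)
  | bexMem i φ ih =>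
    intro h t ht
    obtain ⟨h1, h2⟩ := ih h _ (snoc_tm t ht)
    simp only [← snoc_env] at h1 h2
    have := ht i
    constructor <;> (simp only [SF.Eval]; infer_instance)
  | ballMem i φ ih =>
    intro h t ht
    obtain ⟨h1, h2⟩ := ih h _ (snoc_tm t ht)
    simp only [← snoc_env] at h1 h2
    have := ht i
    constructor <;> (simp only [SF.Eval]; infer_instance)
  | bexSub i φ ih =>
    intro h t ht
    obtain ⟨h1, h2⟩ := ih h _ (snoc_tm t ht)
    simp only [← snoc_env] at h1 h2
    have := ht i
    have ht2 : Tm (fun w => t i (tl w)) :=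
      Tm.comp (t := t i) (u := fun i w => w (i+1)) (fun i => ⟨Sum.inr (i+1), fun v => rfl⟩)
    have ht3 : Tm (fun w => t i (tl (tl w))) :=
      Tm.comp (t := t i) (u := fun i w => w (i+2)) (fun i => ⟨Sum.inr (i+2), fun v => rfl⟩)
    have h3 : Pd E 2 (fun w => φ.Eval E (Fin.snoc (fun i => t i (tl (tl w))) (gv 0 w))) :=
      h2.subst uSk uSk_tm
    constructor
    · simp only [SF.Eval]; infer_instance
    · simp only [SF.Eval, pow_ex_iff]; infer_instance
  | ballSub i φ ih =>
    intro h t ht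
    obtain ⟨h1, h2⟩ := ih h _ (snoc_tm t ht)
    simp only [← snoc_env] at h1 h2
    have := ht i
    have ht2 : Tm (fun w => t i (tl w)) :=
      Tm.comp (t := t i) (u := fun i w => w (i+1)) (fun i => ⟨Sum.inr (i+1), fun v => rfl⟩)
    have ht3 : Tm (fun w => t i (tl (tl w))) :=
      Tm.comp (t := t i) (u := fun i w => w (i+2)) (fun i => ⟨Sum.inr (i+2), fun v => rfl⟩)
    have h3 : Sd E 2 (fun w => φ.Eval E (Fin.snoc (fun i => t i (tl (tl w))) (gv 0 w))) :=
      h1.subst uSk uSk_tm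
    constructor
    · simp only [SF.Eval, pow_all_iff]; infer_instance
    · simp only [SF.Eval]; infer_instance
  | ex φ ih => intro h; exact h.elim
  | all φ ih => intro h; exact h.elim

theorem DP_of_delta0P {n : ℕ} (φ : SF (n + 2)) (h : φ.IsDelta0P) (p : Fin n → X) :
    DP E (fun x y => φ.Eval E (Fin.snoc (Fin.snoc p x) y)) := by
  have e : ∀ v : Env X, (Fin.snoc (Fin.snoc p (gv 0 v)) (gv 1 v) : Fin (n+2) → X) =
      fun i => (Fin.snoc (Fin.snoc (fun i _ => p i) (gv 0)) (gv 1) : Fin (n+2) → Env X → X) i v := by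
    intro v
    funext i
    refine Fin.lastCases ?_ (fun i => ?_) i
    · simp
    · refine Fin.lastCases ?_ (fun i => ?_) i <;> simp
  have := delta0P_D2 (E := E) φ h (Fin.snoc (Fin.snoc (fun i _ => p i) (gv 0)) (gv 1) : Fin (n+2) → Env X → X) (by
    intro i
    refine Fin.lastCases ?_ (fun i => ?_) i
    · simp only [Fin.snoc_last]; infer_instance
    · refine Fin.lastCases ?_ (fun i => ?_) i <;> simp only [Fin.snoc_castSucc, Fin.snoc_last] <;> infer_instance)
  simp only [← e] at this
  exact ⟨this.1, this.2⟩
end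

/-! ## Iteration along the standard `ω` -/
section
set_option linter.unusedSectionVars false
variable {E : X → X → Prop} [hE : MC E]

theorem asym {a b : X} (h : E a b) (h' : E b a) : False := by
  obtain ⟨y, hy, hm⟩ := foundS1 (E := E) (fun x => x = a ∨ x = b) (x := a) (Or.inl rfl)
  rcases hy with rfl | rfl
  · exact hm b h' (Or.inr rfl)
  · exact hm a h (Or.inl rfl)

theorem SuccOf_inj {j j' s : X} (h : SuccOf E j s) (h' : SuccOf E j' s) : j = j' := by
  rcases (h' j).1 ((h j).2 (Or.inr rfl)) with g | g
  · rcases (h j').1 ((h' j').2 (Or.inr rfl)) with g' | g'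
    · exact (asym g g').elim
    · exact g'.symm
  · exact g

structure OmSeq (E : X → X → Prop) (w : X) (f : ℕ → X) : Prop where
  mem : ∀ n, E (f n) w
  surj : ∀ x, E x w → ∃ n, x = f n
  zero : ∀ z, ¬ E z (f 0)
  succ : ∀ n, SuccOf E (f n) (f (n + 1))
  inj : ∀ m n, f m = f n → m = n

theorem OmSeq_ex (hstd : OmegaStandard E) {w : X} (hw : IsOmega E w) : ∃ f, OmSeq E w f := by
  obtain ⟨f, h1, h2, h3⟩ := hstd w hw
  obtain ⟨a, ha⟩ := sepS1 (E := E) (fun x => SubE E x w) w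
  have hI : InductiveSet E a := by
    obtain ⟨⟨e, he, he'⟩, hs⟩ := hw.1
    refine ⟨⟨e, (ha e).2 ⟨he, fun z hz => absurd hz (he' z)⟩, he'⟩, fun x hx => ?_⟩
    obtain ⟨hxw, hsub⟩ := (ha x).1 hx
    obtain ⟨s, hsw, hs⟩ := hs x hxw
    refine ⟨s, (ha s).2 ⟨hsw, fun z hz => ?_⟩, hs⟩
    rcases (hs z).1 hz with h | rfl
    · exact hsub z h
    · exact hxw
  have htr : ∀ n z, E z (f n) → ∃ m, z = f m := fun n z hz =>
    h2 z (((ha (f n)).1 (hw.2 a hI _ (h1 n))).2 z hz)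
  refine ⟨f, h1, h2, fun z hz => ?_, fun n z => ⟨fun hz => ?_, fun hz => ?_⟩, fun m n e => ?_⟩
  · obtain ⟨m, rfl⟩ := htr 0 z hz
    exact absurd ((h3 _ _).1 hz) (by omega)
  · obtain ⟨m, rfl⟩ := htr _ z hz
    have := (h3 _ _).1 hz
    rcases Nat.lt_succ_iff_lt_or_eq.1 this with h | rfl
    · exact Or.inl ((h3 _ _).2 h)
    · exact Or.inr rfl
  · rcases hz with hz | rfl
    · obtain ⟨m, rfl⟩ := htr _ z hz
      have := (h3 _ _).1 hz
      exact (h3 _ _).2 (by omega)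
    · exact (h3 _ _).2 (by omega)
  · rcases lt_trichotomy m n with h | h | h
    · have := (h3 _ _).2 h
      rw [e] at this
      exact absurd this (irr _)
    · exact h
    · have := (h3 _ _).2 h
      rw [e] at this
      exact absurd this (irr _)

def Rs (S : X → X → Prop) (x y : X) : Prop := S x y

class SP (E : X → X → Prop) (P : X → X → Prop) : Prop where
  s : Sd E 2 (fun v => P (gv 0 v) (gv 1 v))

instance (P : X → X → Prop) [h : SP E P] (s t : Env X → X) [Tm s] [Tm t] :
    Sd E 2 (fun v => Rs P (s v) (t v)) := Sd.s2 (P := P) h.s s t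

def ItB (E : X → X → Prop) (S : X → X → Prop) (a0 s i B : X) : Prop :=
  ((∀ z, ¬ E z i) ∧ B = a0) ∨ ∃ j B', SuccOf E j i ∧ FunApp E s j B' ∧ Rs S B' B

def ItOK (E : X → X → Prop) (S : X → X → Prop) (a0 s : X) : Prop :=
  ∀ q, E q s → ∃ i B, IsPair E q i B ∧ ItB E S a0 s i B

def ItV (E : X → X → Prop) (S : X → X → Prop) (a0 i x : X) : Prop :=
  ∃ s, ItOK E S a0 s ∧ FunApp E s i x

instance (S : X → X → Prop) [SP E S] (a0 : X) (r s t : Env X → X) [Tm r] [Tm s] [Tm t] :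
    Sd E 2 (fun v => ItB E S a0 (r v) (s v) (t v)) :=
  Sd.s3 (P := ItB E S a0) (by unfold ItB; infer_instance) r s t
instance (S : X → X → Prop) [SP E S] (a0 : X) (r : Env X → X) [Tm r] :
    Sd E 2 (fun v => ItOK E S a0 (r v)) :=
  Sd.s1 (P := ItOK E S a0) (by unfold ItOK; infer_instance) r
instance (S : X → X → Prop) [SP E S] (a0 : X) (s t : Env X → X) [Tm s] [Tm t] :
    Sd E 2 (fun v => ItV E S a0 (s v) (t v)) :=
  Sd.s2 (P := ItV E S a0) (by unfold ItV; infer_instance) s t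

theorem iterate {w : X} {f : ℕ → X} (hf : OmSeq E w f) (S : X → X → Prop) [SP E S] (a : ℕ → X)
    (ha : ∀ n y, S (a n) y ↔ y = a (n + 1)) :
    ∃ F, (∀ q, E q F ↔ ∃ n, IsPair E q (f n) (a n)) ∧ ∀ x y, FunApp E F x y ↔ ∃ n, x = f n ∧ y = a n := by
  have h1 : ∀ s, ItOK E S (a 0) s → ∀ n x, FunApp E s (f n) x → x = a n := by
    intro s hs n
    induction n with
    | zero =>
      rintro x ⟨q, hq, hp⟩
      obtain ⟨i, B, hp', hB⟩ := hs q hq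
      obtain ⟨rfl, rfl⟩ := IsPair_inj hp hp'
      rcases hB with ⟨_, h⟩ | ⟨j, B', hj, _⟩
      · exact h
      · exact absurd ((hj j).2 (Or.inr rfl)) (hf.zero j)
    | succ n ih =>
      rintro x ⟨q, hq, hp⟩
      obtain ⟨i, B, hp', hB⟩ := hs q hq
      obtain ⟨rfl, rfl⟩ := IsPair_inj hp hp'
      rcases hB with ⟨h, _⟩ | ⟨j, B', hj, hB', hS⟩
      · exact absurd ((hf.succ n _).2 (Or.inr rfl)) (h (f n))
      · obtain rfl := SuccOf_inj hj (hf.succ n)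
        obtain rfl := ih B' hB'
        exact (ha n _).1 hS
  have h2 : ∀ n, ItV E S (a 0) (f n) (a n) := by
    intro n
    induction n with
    | zero =>
      obtain ⟨q, hq⟩ := IsPair_ex (E := E) (f 0) (a 0)
      obtain ⟨s, hs⟩ := IsUP_ex (E := E) q q
      refine ⟨s, fun r hr => ?_, q, hs.1, hq⟩
      have : r = q := (hs.2.2 r hr).elim id id
      subst this
      exact ⟨f 0, a 0, hq, Or.inl ⟨hf.zero, rfl⟩⟩
    | succ n ih =>
      obtain ⟨s, hs, hsn⟩ := ih
      obtain ⟨q, hq⟩ := IsPair_ex (E := E) (f (n+1)) (a (n+1))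
      obtain ⟨s', hs'⟩ := adj_ex (E := E) s q
      have hmono : ∀ i B, FunApp E s i B → FunApp E s' i B := fun i B ⟨r, hr, hp⟩ => ⟨r, (hs' r).2 (Or.inl hr), hp⟩
      refine ⟨s', fun r hr => ?_, q, (hs' q).2 (Or.inr rfl), hq⟩
      rcases (hs' r).1 hr with hr | rfl
      · obtain ⟨i, B, hp, hB⟩ := hs r hr
        refine ⟨i, B, hp, ?_⟩
        rcases hB with h | ⟨j, B', hj, hB', hS⟩
        · exact Or.inl h
        · exact Or.inr ⟨j, B', hj, hmono _ _ hB', hS⟩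
      · exact ⟨f (n+1), a (n+1), hq, Or.inr ⟨f n, a n, hf.succ n, hmono _ _ hsn, (ha n _).2 rfl⟩⟩
  obtain ⟨F, hF⟩ := repl (E := E) (fun i q => ∃ x, ItV E S (a 0) i x ∧ IsPair E q i x) w (by
    intro i hi
    obtain ⟨n, rfl⟩ := hf.surj i hi
    obtain ⟨q, hq⟩ := IsPair_ex (E := E) (f n) (a n)
    exact ⟨q, a n, h2 n, hq⟩) (by
    rintro i hi q q' ⟨x, ⟨s, hs, hx⟩, hq⟩ ⟨x', ⟨s', hs', hx'⟩, hq'⟩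
    obtain ⟨n, rfl⟩ := hf.surj i hi
    obtain rfl := h1 s hs n x hx
    obtain rfl := h1 s' hs' n x' hx'
    exact IsPair_unique hq hq')
  have hF1 : ∀ q, E q F ↔ ∃ n, IsPair E q (f n) (a n) := by
    intro q
    rw [hF]
    constructor
    · rintro ⟨i, hi, x, ⟨s, hs, hx⟩, hq⟩
      obtain ⟨n, rfl⟩ := hf.surj i hi
      obtain rfl := h1 s hs n x hx
      exact ⟨n, hq⟩
    · rintro ⟨n, hq⟩
      exact ⟨f n, hf.mem n, a n, h2 n, hq⟩
  refine ⟨F, hF1, FunApp_of_pairs (R := fun x y => ∃ n, x = f n ∧ y = a n) fun q => (hF1 q).trans ⟨?_, ?_⟩⟩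
  · rintro ⟨n, h⟩; exact ⟨_, _, h, n, rfl, rfl⟩
  · rintro ⟨_, _, h, n, rfl, rfl⟩; exact ⟨n, h⟩

/-- A set containing `b` and closed under taking `P`-successors. -/
theorem closure_ex {w : X} {f : ℕ → X} (hf : OmSeq E w f) (P : X → X → Prop) [DP E P]
    (hP : ∀ x, ∃ y, P x y) (b : X) : ∃ H, E b H ∧ ∀ x, E x H → ∃ y, E y H ∧ P x y := by
  choose nxt hnxt using StepA_ex (E := E) P hP
  obtain ⟨κ, _, hκ, _⟩ := InG_all (E := E) b
  obtain ⟨A0, hA0⟩ := IsG_ex (E := E) κ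
  let A : ℕ → X := fun n => Nat.rec A0 (fun _ x => nxt x) n
  have hA : ∀ n, StepA E P (A n) (A (n + 1)) := fun n => hnxt (A n)
  have : SP E (StepA E P) := ⟨inferInstance⟩
  obtain ⟨F, hF, _⟩ := iterate hf (StepA E P) A (fun n y => ⟨fun h => StepA_unique P h (hA n), fun h => h ▸ hA n⟩)
  obtain ⟨C, hC⟩ := repl (E := E) (fun q y => ∃ i, IsPair E q i y) F (by
    intro q hq
    obtain ⟨n, hn⟩ := (hF q).1 hq
    exact ⟨_, _, hn⟩) (fun q _ y y' ⟨i, h⟩ ⟨i', h'⟩ => (IsPair_inj h h').2)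
  have hC' : ∀ n, E (A n) C := by
    intro n
    obtain ⟨q, hq⟩ := IsPair_ex (E := E) (f n) (A n)
    exact (hC _).2 ⟨q, (hF q).2 ⟨n, hq⟩, _, hq⟩
  obtain ⟨H, hH⟩ := MC.union E C
  refine ⟨H, (hH b).2 ⟨A 0, hC' 0, (hA0 b).2 hκ⟩, fun x hx => ?_⟩
  obtain ⟨y, hy, hxy⟩ := (hH x).1 hx
  obtain ⟨q, hq, i, hi⟩ := (hC y).1 hy
  obtain ⟨n, hn⟩ := (hF q).1 hq
  obtain ⟨_, rfl⟩ := IsPair_inj hi hn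
  obtain ⟨z, hz, hxz⟩ := StepA_prop P (hA n) x hxy
  exact ⟨z, (hH z).2 ⟨_, hC' (n+1), hz⟩, hxz⟩

def StepC (E : X → X → Prop) (P : X → X → Prop) (H c x y : X) : Prop :=
  ∃ u, SubE E u H ∧ (∀ z, E z H → (E z u ↔ Rl P x z)) ∧ Ch E c u y
def StepS (E : X → X → Prop) (P : X → X → Prop) (H c x y : X) : Prop :=
  ∃ x' y', IsUP E x x' x' ∧ IsUP E y y' y' ∧ StepC E P H c x' y'

instance (P : X → X → Prop) [DP E P] (H c : X) (s t : Env X → X) [Tm s] [Tm t] :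
    Sd E 2 (fun v => StepC E P H c (s v) (t v)) :=
  Sd.s2 (P := StepC E P H c) (by unfold StepC; infer_instance) s t
instance (P : X → X → Prop) [DP E P] (H c : X) : SP E (StepS E P H c) :=
  ⟨by unfold StepS; infer_instance⟩

theorem WDC_core (hstd : OmegaStandard E) (P : X → X → Prop) [DP E P] (hP : ∀ x, ∃ y, P x y) {w : X}
    (hw : IsOmega E w) (b : X) : ∃ (f : ℕ → X) (x : ℕ → X) (s : ℕ → X) (F : X), OmSeq E w f ∧ x 0 = b ∧
      (∀ n, IsUP E (s n) (x n) (x n)) ∧ (∀ n, P (x n) (x (n + 1))) ∧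
      (∀ q, E q F ↔ ∃ n, IsPair E q (f n) (s n)) ∧ ∀ x y, FunApp E F x y ↔ ∃ n, x = f n ∧ y = s n := by
  obtain ⟨f, hf⟩ := OmSeq_ex hstd hw
  obtain ⟨H, hbH, hH⟩ := closure_ex hf P hP b
  obtain ⟨c, hc1, hc2⟩ := choice_ex (E := E) H
  have step : ∀ x : {x // E x H}, ∃ y : {y // E y H}, P x.1 y.1 ∧ StepC E P H c x.1 y.1 := by
    rintro ⟨x, hx⟩
    obtain ⟨u, hu⟩ := sepD2 (E := E) (fun z => Rl P x z) H
    obtain ⟨z, hz, hxz⟩ := hH x hx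
    have hsub : SubE E u H := fun z hz => ((hu z).1 hz).1
    obtain ⟨y, hy⟩ := hc1 u hsub ⟨z, (hu z).2 ⟨hz, hxz⟩⟩
    obtain ⟨h1, h2⟩ := (hu y).1 hy.1
    exact ⟨⟨y, h1⟩, h2, u, hsub, fun z hz => (hu z).trans ⟨And.right, fun h => ⟨hz, h⟩⟩, hy⟩
  have uniq : ∀ x y y', StepC E P H c x y → StepC E P H c x y' → y = y' := by
    rintro x y y' ⟨u, h1, h2, h3⟩ ⟨u', h1', h2', h3'⟩
    have : u = u' := MC.ext E fun z =>
      ⟨fun hz => (h2' z (h1 z hz)).2 ((h2 z (h1 z hz)).1 hz), fun hz => (h2 z (h1' z hz)).2 ((h2' z (h1' z hz)).1 hz)⟩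
    subst this
    exact hc2 u y y' h1 h3 h3'
  choose nxt hn1 hn2 using step
  let x : ℕ → {x // E x H} := fun n => Nat.rec ⟨b, hbH⟩ (fun _ x => nxt x) n
  have hx1 : ∀ n, P (x n).1 (x (n+1)).1 := fun n => hn1 (x n)
  have hx2 : ∀ n, StepC E P H c (x n).1 (x (n+1)).1 := fun n => hn2 (x n)
  choose s hs using fun n => IsUP_ex (E := E) (x n).1 (x n).1
  obtain ⟨F, hF1, hF2⟩ := iterate hf (StepS E P H c) s (by
    intro n y
    constructor
    · rintro ⟨x', y', h1, h2, h3⟩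
      obtain rfl : x' = (x n).1 := ((hs n).2.2 x' h1.1).elim id id
      obtain rfl := uniq _ _ _ h3 (hx2 n)
      exact IsUP_unique h2 (hs (n+1))
    · rintro rfl
      exact ⟨_, _, hs n, hs (n+1), hx2 n⟩)
  exact ⟨f, fun n => (x n).1, s, F, hf, rfl, hs, hx1, hF1, hF2⟩
end

/-- every `ω`-standard model of `MOST + Π₁-Collection` satisfies
`Δ₀^𝒫-WDC_ω`. -/
theorem WDC_in_omega_standard_MOST (X : Type u) (E : X → X → Prop)
    (hM : ModelMOST E) (hColl : CollectionScheme E Pi1C)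
    (hstd : OmegaStandard E) : WDComega E := by
  have hE : MC E := ⟨hM, hColl⟩
  intro n φ hφ p h w hw b
  have hD : DP E (fun x y => φ.Eval E (Fin.snoc (Fin.snoc p x) y)) := DP_of_delta0P φ hφ p
  obtain ⟨f, x, s, F, hf, hx0, hs, hx, hF1, hF2⟩ := WDC_core hstd
    (fun x y => φ.Eval E (Fin.snoc (Fin.snoc p x) y)) h hw b
  have hmem : ∀ n t, E t (s n) ↔ t = x n := fun n t =>
    ⟨fun ht => ((hs n).2.2 t ht).elim id id, fun e => e ▸ (hs n).1⟩
  refine ⟨F, ⟨fun q hq => ?_, fun a y y' hy hy' => ?_, fun a ha => ?_⟩, ?_, ?_⟩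
  · obtain ⟨n, hn⟩ := (hF1 q).1 hq
    exact ⟨_, _, hn, hf.mem n⟩
  · obtain ⟨n, rfl, rfl⟩ := (hF2 _ _).1 hy
    obtain ⟨m, hm, rfl⟩ := (hF2 _ _).1 hy'
    rw [hf.inj _ _ hm]
  · obtain ⟨n, rfl⟩ := hf.surj a ha
    exact ⟨s n, (hF2 _ _).2 ⟨n, rfl, rfl⟩⟩
  · exact ⟨f 0, s 0, hf.zero, hf.mem 0, (hF2 _ _).2 ⟨0, rfl, rfl⟩, fun t => by rw [hmem, hx0]⟩
  · intro m m' vm vm' _ hmm' _ hm hm'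
    obtain ⟨i, rfl, rfl⟩ := (hF2 _ _).1 hm
    obtain ⟨j, rfl, rfl⟩ := (hF2 _ _).1 hm'
    have e : f j = f (i + 1) := MC.ext E fun z => (hmm' z).trans (hf.succ i z).symm
    obtain rfl := hf.inj _ _ e
    refine ⟨fun a ha => ⟨x (i + 1), (hs _).1, ?_⟩, fun y hy a ha => ?_⟩
    · rw [(hmem i a).1 ha]; exact hx i
    · rw [(hmem i a).1 ha, (hmem _ y).1 hy]; exact hx i
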